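/- arXiv:1610.02566 — 4 statements merged into one kernel-verified Lean document; each statement's English description precedes it below -/
import Mathlib

section
/- Under the energy-harvesting block-transmission model, for every r in the interval (0, 1/η_U], the estimation error satisfies P(ε < err_I) ≥ 1 − f_bt(μ_I, ϱ_I, r), where err_I = P_x / (1 + (μ_E/σ_w²)(1/η_U − r)), μ_I = (1/η_L)·max{r_E − 1, 1}·min{Q·η_U, 1}, and ϱ_I = (ϱ_E/μ_E²)·(1/η_L²)·(1/Q)·min{Q·η_U, 1}. -/
open Matrix Finset MeasureTheory ProbabilityTheory

/-- Squared Euclidean norm of `u_i`, the conjugate transpose of the `i`-th row of `Us`. -/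
noncomputable def rowNormSq {N s : ℕ} (Us : Matrix (Fin N) (Fin s) ℂ) (i : Fin N) : ℝ :=
  ∑ j, ‖Us i j‖ ^ 2

/-- The (0-based) global index `(k−1)·Q + t` of sample `t` of block `k`. -/
def blockIdx (nT Q : ℕ) (k : Fin nT) (t : Fin Q) : Fin (nT * Q) := finProdFinEquiv (k, t)

/-- The block containing global index `i`. -/
def blockOf (nT Q : ℕ) (i : Fin (nT * Q)) : Fin nT := (finProdFinEquiv.symm i).1

/-- `h(a) = (1+a)·log(1+a) − a`. -/
noncomputable def hfun (a : ℝ) : ℝ := (1 + a) * Real.log (1 + a) - a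

/-- `f_bt(μ, ϱ, r) = 2s·exp(−(ϱ/μ²)·h(μ·r/ϱ))`. -/
noncomputable def fbt (s : ℕ) (μ ϱ r : ℝ) : ℝ :=
  2 * s * Real.exp (-(ϱ / μ ^ 2) * hfun (μ * r / ϱ))



lemma aux_slope (w : ℝ) (hw0 : 0 ≤ w) (hw1 : w ≤ 1) (D d : ℝ) (hD : D ≠ 0) :
    (d^2 - D*d) * Real.exp (w*d) ≤ (d^2 - D*d) *
      (1 - (Real.exp (w*D) - 1)/(Real.exp D - 1)
        + (Real.exp (w*D) - 1)/(Real.exp D - 1) * Real.exp d) := by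
  rcases eq_or_ne d 0 with rfl | hd
  · simp
  have hc := (Real.concaveOn_rpow hw0 hw1).slope_anti (x := 1) (by simp)
  have hne : ∀ x : ℝ, x ≠ 0 → Real.exp x ≠ 1 := fun x hx h => hx (by simpa using h)
  have hmem : ∀ x : ℝ, x ≠ 0 → Real.exp x ∈ Set.Ici (0:ℝ) \ {1} := fun x hx =>
    ⟨(Real.exp_pos x).le, by simpa using hx⟩
  have hsl : ∀ x : ℝ, slope (fun z : ℝ => z ^ w) 1 (Real.exp x) =
      (Real.exp (w*x) - 1)/(Real.exp x - 1) := by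
    intro x
    rw [slope_def_field, ← Real.exp_mul, Real.one_rpow, mul_comm x w]
  set τ := (Real.exp (w*D) - 1)/(Real.exp D - 1) with hτ
  have hF : Real.exp (w*d) - 1 = (Real.exp (w*d) - 1)/(Real.exp d - 1) * (Real.exp d - 1) := by
    have := sub_ne_zero.2 (hne d hd)
    field_simp
  set σ := (Real.exp (w*d) - 1)/(Real.exp d - 1) with hσ
  have h1 : 0 ≤ d * (Real.exp d - 1) := by
    rcases le_total 0 d with h | h
    · exact mul_nonneg h (by simpa using h)
    · exact mul_nonneg_of_nonpos_of_nonpos h (by simpa using h)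
  have h2 : (d - D) * (σ - τ) ≤ 0 := by
    rcases le_total D d with h | h
    · have := hc (hmem D hD) (hmem d hd) (Real.exp_le_exp.2 h)
      rw [hsl, hsl] at this
      exact mul_nonpos_of_nonneg_of_nonpos (by linarith) (by linarith)
    · have := hc (hmem d hd) (hmem D hD) (Real.exp_le_exp.2 h)
      rw [hsl, hsl] at this
      exact mul_nonpos_of_nonpos_of_nonneg (by linarith) (by linarith)
  have h3 := mul_nonneg h1 (neg_nonneg.2 h2)
  have : Real.exp (w*d) = 1 + σ * (Real.exp d - 1) := by linarith
  rw [this]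
  nlinarith

lemma scalar_ineq (D : ℝ) (hD : D ≠ 0) : ∃ α β : ℝ, 0 ≤ α ∧ 0 ≤ β ∧ ∀ d : ℝ,
    Real.exp d - 1 - (Real.exp D - 1)/D * d ≤ (d^2 - D*d) * (α + β * Real.exp d) := by
  set ρ : ℝ → ℝ := fun w => (Real.exp ((1-w)*D) - 1)/D with hρ
  set τ : ℝ → ℝ := fun w => (Real.exp (w*D) - 1)/(Real.exp D - 1) with hτ
  have hρ0 : ∀ w ∈ Set.Icc (0:ℝ) 1, 0 ≤ ρ w := by
    intro w hw
    rcases lt_or_gt_of_ne hD with h | h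
    · exact div_nonneg_of_nonpos (by simpa using mul_nonpos_of_nonneg_of_nonpos (by linarith [hw.2]) h.le) h.le
    · exact div_nonneg (by simpa using mul_nonneg (by linarith [hw.2]) h.le) h.le
  have hτ01 : ∀ w ∈ Set.Icc (0:ℝ) 1, 0 ≤ τ w ∧ τ w ≤ 1 := by
    intro w hw
    rcases lt_or_gt_of_ne hD with h | h
    · have h1 : Real.exp D - 1 < 0 := by simpa using h
      refine ⟨div_nonneg_of_nonpos (by simpa using mul_nonpos_of_nonneg_of_nonpos hw.1 h.le) h1.le, ?_⟩
      rw [div_le_one_of_neg h1]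
      have := Real.exp_le_exp.2 (show D ≤ w * D by nlinarith [hw.2])
      linarith
    · have h1 : 0 < Real.exp D - 1 := by simpa using h
      refine ⟨div_nonneg (by simpa using mul_nonneg hw.1 h.le) h1.le, ?_⟩
      rw [div_le_one h1]
      have := Real.exp_le_exp.2 (show w * D ≤ D by nlinarith [hw.2])
      linarith
  have cρ : Continuous ρ := by fun_prop
  have cτ : Continuous τ := by fun_prop
  refine ⟨∫ w in (0:ℝ)..1, ρ w * (1 - τ w), ∫ w in (0:ℝ)..1, ρ w * τ w, ?_, ?_, ?_⟩
  · exact intervalIntegral.integral_nonneg zero_le_one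
      fun w hw => mul_nonneg (hρ0 w hw) (by linarith [(hτ01 w hw).2])
  · exact intervalIntegral.integral_nonneg zero_le_one
      fun w hw => mul_nonneg (hρ0 w hw) (hτ01 w hw).1
  intro d
  have e1 : ∫ w in (0:ℝ)..1, ρ w * ((d^2 - D*d) * Real.exp (w*d)) =
      Real.exp d - 1 - (Real.exp D - 1)/D * d := by
    have := intervalIntegral.integral_eq_sub_of_hasDerivAt (a := (0:ℝ)) (b := 1)
      (f := fun w => d/D * Real.exp (D + w*(d-D)) - (d-D)/D * Real.exp (w*d))
      (f' := fun w => ρ w * ((d^2 - D*d) * Real.exp (w*d))) (by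
        intro w _
        have h1 : HasDerivAt (fun w : ℝ => D + w*(d-D)) (d-D) w := by
          simpa using ((hasDerivAt_id w).mul_const (d-D)).const_add D
        have h2 : HasDerivAt (fun w : ℝ => w*d) d w := by
          simpa using (hasDerivAt_id w).mul_const d
        refine ((h1.exp.const_mul (d/D)).sub (h2.exp.const_mul ((d-D)/D))).congr_deriv ?_
        have : Real.exp (D + w*(d-D)) = Real.exp ((1-w)*D) * Real.exp (w*d) := by
          rw [← Real.exp_add]; ring_nf
        rw [this, hρ]
        field_simp) (by apply Continuous.intervalIntegrable; fun_prop)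
    rw [this]
    simp
    field_simp
    ring
  have e2 : ∫ w in (0:ℝ)..1, ρ w * ((d^2 - D*d) * (1 - τ w + τ w * Real.exp d)) =
      (d^2 - D*d) * ((∫ w in (0:ℝ)..1, ρ w * (1 - τ w)) + (∫ w in (0:ℝ)..1, ρ w * τ w) * Real.exp d) := by
    rw [← intervalIntegral.integral_mul_const, ← intervalIntegral.integral_add,
      ← intervalIntegral.integral_const_mul]
    · congr 1; ext w; ring
    · apply Continuous.intervalIntegrable; fun_prop
    · apply Continuous.intervalIntegrable; fun_prop
  rw [← e1, ← e2]
  apply intervalIntegral.integral_mono_on zero_le_one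
  · apply Continuous.intervalIntegrable; fun_prop
  · apply Continuous.intervalIntegrable; fun_prop
  · intro w hw
    exact mul_le_mul_of_nonneg_left (aux_slope w hw.1 hw.2 D d hD) (hρ0 w hw)

section mats
open scoped ComplexOrder

/-- Functional calculus for a diagonalised matrix. -/
noncomputable def fcal {s : ℕ} (V : Matrix (Fin s) (Fin s) ℂ) (f : Fin s → ℝ) :
    Matrix (Fin s) (Fin s) ℂ := V * diagonal (fun i => (f i : ℂ)) * Vᴴ

lemma exists_diag {s : ℕ} (K : Matrix (Fin s) (Fin s) ℂ) (hK : K.IsHermitian) :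
    ∃ (V : Matrix (Fin s) (Fin s) ℂ) (κ : Fin s → ℝ), Vᴴ * V = 1 ∧ V * Vᴴ = 1 ∧ K = fcal V κ := by
  refine ⟨hK.eigenvectorUnitary, hK.eigenvalues, ?_, ?_, ?_⟩
  · exact Unitary.coe_star_mul_self hK.eigenvectorUnitary
  · exact Unitary.coe_mul_star_self hK.eigenvectorUnitary
  · have := hK.spectral_theorem
    rw [Unitary.conjStarAlgAut_apply] at this
    exact this

lemma fcal_mul {s : ℕ} {V : Matrix (Fin s) (Fin s) ℂ} (h1 : Vᴴ * V = 1) (f g : Fin s → ℝ) :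
    fcal V f * fcal V g = fcal V (fun i => f i * g i) := by
  unfold fcal
  calc _ = V * diagonal (fun i => (f i : ℂ)) * (Vᴴ * V) * diagonal (fun i => (g i : ℂ)) * Vᴴ := by
        simp only [Matrix.mul_assoc]
    _ = V * (diagonal (fun i => (f i : ℂ)) * diagonal (fun i => (g i : ℂ))) * Vᴴ := by
        rw [h1]; simp only [Matrix.mul_assoc, Matrix.one_mul]
    _ = _ := by rw [diagonal_mul_diagonal]; simp

lemma fcal_one {s : ℕ} {V : Matrix (Fin s) (Fin s) ℂ} (h2 : V * Vᴴ = 1) :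
    fcal V (fun _ => 1) = 1 := by
  unfold fcal; simp [h2]

lemma fcal_exp {s : ℕ} {V : Matrix (Fin s) (Fin s) ℂ} (h1 : Vᴴ * V = 1) (κ : Fin s → ℝ) :
    NormedSpace.exp (fcal V κ) = fcal V (fun i => Real.exp (κ i)) := by
  have hu : IsUnit V := (Matrix.isUnit_iff_isUnit_det _).2 (Matrix.isUnit_det_of_left_inverse h1)
  have hinv : V⁻¹ = Vᴴ := Matrix.inv_eq_left_inv h1
  unfold fcal
  rw [← hinv, Matrix.exp_conj _ _ hu, Matrix.exp_diagonal]
  congr 3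
  ext i
  rw [Pi.coe_exp, ← Complex.exp_eq_exp_ℂ]
  simp

lemma fcal_trace_mul {s : ℕ} (V W : Matrix (Fin s) (Fin s) ℂ) (f g : Fin s → ℝ) :
    (fcal V f * fcal W g).trace.re = ∑ i, ∑ j, ‖(Vᴴ * W) i j‖^2 * (f i * g j) := by
  have : (fcal V f * fcal W g).trace =
     (diagonal (fun i => (f i : ℂ)) * (Vᴴ * W) * diagonal (fun i => (g i : ℂ)) * (Vᴴ * W)ᴴ).trace := by
    unfold fcal
    rw [Matrix.conjTranspose_mul, Matrix.conjTranspose_conjTranspose]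
    calc _ = (V * (diagonal (fun i => (f i : ℂ)) * Vᴴ * W * diagonal (fun i => (g i : ℂ)) * Wᴴ)).trace := by
          simp only [Matrix.mul_assoc]
      _ = _ := by rw [Matrix.trace_mul_comm]; simp only [Matrix.mul_assoc]
  rw [this]
  set C := Vᴴ * W
  rw [Matrix.trace, Complex.re_sum]
  refine Finset.sum_congr rfl fun i _ => ?_
  rw [Matrix.diag_apply, Matrix.mul_apply, Complex.re_sum]
  refine Finset.sum_congr rfl fun j _ => ?_
  rw [Matrix.mul_diagonal, Matrix.diagonal_mul, Matrix.conjTranspose_apply]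
  rw [← Complex.normSq_eq_norm_sq, Complex.normSq_apply]
  simp [Complex.mul_re, Complex.mul_im]
  ring

lemma fcal_posSemidef {s : ℕ} (V : Matrix (Fin s) (Fin s) ℂ) (f : Fin s → ℝ) (hf : ∀ i, 0 ≤ f i) :
    (fcal V f).PosSemidef := by
  unfold fcal
  apply PosSemidef.mul_mul_conjTranspose_same
  exact PosSemidef.diagonal fun i => by simpa using hf i

lemma trace_mul_nonneg {s : ℕ} {V : Matrix (Fin s) (Fin s) ℂ} (f : Fin s → ℝ)
    (hf : ∀ i, 0 ≤ f i) {A : Matrix (Fin s) (Fin s) ℂ} (hA : A.PosSemidef) :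
    0 ≤ (fcal V f * A).trace.re := by
  have h : (fcal V f * A).trace = (diagonal (fun i => (f i : ℂ)) * (Vᴴ * A * V)).trace := by
    unfold fcal
    rw [Matrix.mul_assoc, Matrix.mul_assoc, Matrix.trace_mul_comm]; simp only [Matrix.mul_assoc]
  rw [h, Matrix.trace, Complex.re_sum]
  refine Finset.sum_nonneg fun i _ => ?_
  rw [Matrix.diag_apply, Matrix.diagonal_mul]
  have := (hA.conjTranspose_mul_mul_same V).diag_nonneg (i := i)
  rw [Complex.le_def] at this
  simp only [Complex.re_ofReal_mul]
  exact mul_nonneg (hf i) this.1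

/-- trace exponential -/
noncomputable def trE {s : ℕ} (K : Matrix (Fin s) (Fin s) ℂ) : ℝ := (NormedSpace.exp K).trace.re
noncomputable def trQ {s : ℕ} (B K : Matrix (Fin s) (Fin s) ℂ) : ℝ := (NormedSpace.exp K * B).trace.re

lemma exp_continuous_matrix {s : ℕ} :
    Continuous (fun K : Matrix (Fin s) (Fin s) ℂ => NormedSpace.exp K) :=
  open scoped Matrix.Norms.Operator in NormedSpace.exp_continuous

lemma trE_continuous {s : ℕ} : Continuous (trE (s := s)) := by
  unfold trE
  exact Complex.continuous_re.comp exp_continuous_matrix.matrix_trace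

lemma trQ_continuous {s : ℕ} (B : Matrix (Fin s) (Fin s) ℂ) : Continuous (trQ B) := by
  unfold trQ
  exact Complex.continuous_re.comp (exp_continuous_matrix.matrix_mul continuous_const).matrix_trace

lemma fcal_trace {s : ℕ} {V : Matrix (Fin s) (Fin s) ℂ} (h1 : Vᴴ * V = 1) (f : Fin s → ℝ) :
    (fcal V f).trace.re = ∑ i, f i := by
  unfold fcal
  rw [Matrix.trace_mul_comm, ← Matrix.mul_assoc, h1, Matrix.one_mul, Matrix.trace_diagonal]
  simp

lemma trE_nonneg {s : ℕ} (K : Matrix (Fin s) (Fin s) ℂ) (hK : K.IsHermitian) : 0 ≤ trE K := by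
  obtain ⟨V, κ, h1, h2, rfl⟩ := exists_diag K hK
  rw [trE, fcal_exp h1, fcal_trace h1]
  positivity

lemma trQ_nonneg {s : ℕ} (B K : Matrix (Fin s) (Fin s) ℂ) (hK : K.IsHermitian) (hB : B.PosSemidef) :
    0 ≤ trQ B K := by
  obtain ⟨V, κ, h1, h2, rfl⟩ := exists_diag K hK
  rw [trQ, fcal_exp h1]
  exact trace_mul_nonneg _ (fun i => (Real.exp_pos _).le) hB

/-- Klein's inequality. -/
lemma klein {s : ℕ} (B K : Matrix (Fin s) (Fin s) ℂ) (hK : K.IsHermitian) (hB : B.IsHermitian) (c : ℝ) :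
    trE K + c * trQ B K ≤ trE (K + (c:ℂ) • B) := by
  have hK' : (K + (c:ℂ) • B).IsHermitian := by
    refine hK.add (hB.smul ?_); simp [IsSelfAdjoint]
  obtain ⟨W, κ', w1, w2, hW⟩ := exists_diag _ hK'
  obtain ⟨V, κ, h1, h2, rfl⟩ := exists_diag K hK
  have hcq : c * trQ B (fcal V κ) = (NormedSpace.exp (fcal V κ) * fcal W κ').trace.re
      - (NormedSpace.exp (fcal V κ) * fcal V κ).trace.re := by
    rw [← hW, trQ, Matrix.mul_add, Matrix.trace_add]
    simp
  rw [hcq, hW, trE, trE, fcal_exp h1, fcal_exp w1, fcal_mul h1, fcal_trace_mul]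
  have a1 := fcal_trace_mul V W (fun i => Real.exp (κ i)) (fun _ => 1)
  have a2 := fcal_trace_mul V W (fun i => Real.exp (κ i) * κ i) (fun _ => 1)
  have a3 := fcal_trace_mul V W (fun _ => 1) (fun i => Real.exp (κ' i))
  rw [fcal_one w2, Matrix.mul_one] at a1 a2
  rw [fcal_one h2, Matrix.one_mul] at a3
  rw [a1, a2, a3]
  simp only [← Finset.sum_add_distrib, ← Finset.sum_sub_distrib, ← add_sub_assoc]
  refine Finset.sum_le_sum fun i _ => Finset.sum_le_sum fun j _ => ?_
  rw [← mul_add, ← mul_sub]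
  refine mul_le_mul_of_nonneg_left ?_ (by positivity)
  have e : Real.exp (κ' j) = Real.exp (κ i) * Real.exp (κ' j - κ i) := by
    rw [← Real.exp_add]; ring_nf
  have := Real.add_one_le_exp (κ' j - κ i)
  nlinarith [Real.exp_pos (κ i)]

lemma upper {s : ℕ} (B K : Matrix (Fin s) (Fin s) ℂ) (hK : K.IsHermitian) (hB : B.IsHermitian)
    (b : ℝ) (hb : 0 < b) (hBB : ((b:ℂ) • B - B * B).PosSemidef) (x : ℝ) :
    trE (K + (x:ℂ) • B) ≤ trE K + (Real.exp (b*x) - 1)/b * trQ B K := by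
  rcases eq_or_ne x 0 with rfl | hx
  · simp
  obtain ⟨α, β, hα, hβ, hd⟩ := scalar_ineq (b*x) (by positivity)
  have hK' : (K + (x:ℂ) • B).IsHermitian := by
    refine hK.add (hB.smul ?_); simp [IsSelfAdjoint]
  obtain ⟨W, κ', w1, w2, hW⟩ := exists_diag _ hK'
  obtain ⟨V, κ, h1, h2, rfl⟩ := exists_diag K hK
  set p : Fin s → Fin s → ℝ := fun i j => ‖(Vᴴ * W) i j‖^2 with hp
  have hxB : (x:ℂ) • B = fcal W κ' - fcal V κ := by rw [← hW]; simp
  -- traces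
  have t1 : trE (fcal V κ) = ∑ i, ∑ j, p i j * Real.exp (κ i) := by
    have a1 := fcal_trace_mul V W (fun i => Real.exp (κ i)) (fun _ => 1)
    rw [fcal_one w2, Matrix.mul_one] at a1
    rw [trE, fcal_exp h1, a1]; simp [hp]
  have t2 : trE (fcal W κ') = ∑ i, ∑ j, p i j * Real.exp (κ' j) := by
    have a1 := fcal_trace_mul V W (fun _ => 1) (fun i => Real.exp (κ' i))
    rw [fcal_one h2, Matrix.one_mul] at a1
    rw [trE, fcal_exp w1, a1]; simp [hp]
  have t3 : x * trQ B (fcal V κ) = ∑ i, ∑ j, p i j * (Real.exp (κ i) * (κ' j - κ i)) := by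
    have a1 := fcal_trace_mul V W (fun i => Real.exp (κ i)) κ'
    have a2 := fcal_trace_mul V W (fun i => Real.exp (κ i) * κ i) (fun _ => 1)
    rw [fcal_one w2, Matrix.mul_one] at a2
    have : x * trQ B (fcal V κ) = (NormedSpace.exp (fcal V κ) * (x:ℂ) • B).trace.re := by
      simp [trQ]
    rw [this, hxB, fcal_exp h1, Matrix.mul_sub, fcal_mul h1, Matrix.trace_sub, Complex.sub_re, a1, a2]
    simp only [← Finset.sum_sub_distrib]
    refine Finset.sum_congr rfl fun i _ => Finset.sum_congr rfl fun j _ => ?_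
    simp only [hp]; ring
  -- quadratic terms
  have key : ((((b*x : ℝ):ℂ) • ((x:ℂ) • B)) - ((x:ℂ) • B) * ((x:ℂ) • B)).PosSemidef := by
    have : ((((b*x : ℝ):ℂ) • ((x:ℂ) • B)) - ((x:ℂ) • B) * ((x:ℂ) • B)) =
        ((x^2 : ℝ) : ℂ) • ((b:ℂ) • B - B * B) := by
      rw [smul_sub]; simp only [smul_smul, Matrix.smul_mul, Matrix.mul_smul]
      push_cast; ring_nf
    rw [this]
    refine hBB.smul ?_
    rw [Complex.zero_le_real]; positivity
  have q1 : 0 ≤ ∑ i, ∑ j, p i j * (Real.exp (κ i) * ((b*x) * (κ' j - κ i) - (κ' j - κ i)^2)) := by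
    have h := trace_mul_nonneg (V := V) (fun i => Real.exp (κ i)) (fun i => (Real.exp_pos _).le) key
    have a1 := fcal_trace_mul V W (fun i => Real.exp (κ i)) κ'
    have a2 := fcal_trace_mul V W (fun i => Real.exp (κ i) * κ i) (fun _ => 1)
    have a3 := fcal_trace_mul V W (fun i => Real.exp (κ i)) (fun j => κ' j * κ' j)
    have a4 := fcal_trace_mul V W (fun i => Real.exp (κ i) * κ i) κ'
    have a6 := fcal_trace_mul V W (fun i => κ i * Real.exp (κ i)) κ'
    have a5 := fcal_trace_mul V W (fun i => Real.exp (κ i) * (κ i * κ i)) (fun _ => 1)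
    rw [fcal_one w2, Matrix.mul_one] at a2 a5
    convert h using 1
    rw [hxB]
    have e4 : fcal V (fun i => Real.exp (κ i)) * (fcal V κ * fcal W κ') =
        fcal V (fun i => Real.exp (κ i) * κ i) * fcal W κ' := by
      rw [← Matrix.mul_assoc, fcal_mul h1]
    have e6 : (fcal V (fun i => Real.exp (κ i)) * (fcal W κ' * fcal V κ)).trace =
        (fcal V (fun i => κ i * Real.exp (κ i)) * fcal W κ').trace := by
      rw [← Matrix.mul_assoc, Matrix.trace_mul_comm, ← Matrix.mul_assoc, fcal_mul h1]
    rw [Matrix.mul_sub, Matrix.trace_sub]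
    simp only [Matrix.sub_mul, Matrix.mul_sub, Matrix.mul_smul, Matrix.trace_sub, Matrix.trace_smul,
      smul_eq_mul, Complex.sub_re, Complex.re_ofReal_mul, e4, e6, fcal_mul h1, fcal_mul w1,
      a1, a2, a3, a4, a5, a6]
    simp only [Finset.mul_sum, ← Finset.sum_sub_distrib]
    refine Finset.sum_congr rfl fun i _ => Finset.sum_congr rfl fun j _ => ?_
    simp only [hp]; ring
  have q2 : 0 ≤ ∑ i, ∑ j, p i j * (Real.exp (κ' j) * ((b*x) * (κ' j - κ i) - (κ' j - κ i)^2)) := by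
    have h := trace_mul_nonneg (V := W) (fun i => Real.exp (κ' i)) (fun i => (Real.exp_pos _).le) key
    have h' : ∀ (f g : Fin s → ℝ), (fcal W f * fcal V g).trace.re =
      ∑ i, ∑ j, p i j * (g i * f j) := by
      intro f g
      rw [Matrix.trace_mul_comm, fcal_trace_mul]
    have a1 := h' (fun i => Real.exp (κ' i)) κ
    have a2 := h' (fun i => Real.exp (κ' i) * κ' i) (fun _ => 1)
    have a3 := h' (fun i => Real.exp (κ' i)) (fun j => κ j * κ j)
    have a4 := h' (fun i => Real.exp (κ' i) * κ' i) κ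
    have a6 := h' (fun i => κ' i * Real.exp (κ' i)) κ
    have a5 := h' (fun i => Real.exp (κ' i) * (κ' i * κ' i)) (fun _ => 1)
    rw [fcal_one h2, Matrix.mul_one] at a2 a5
    convert h using 1
    rw [hxB]
    have e4 : fcal W (fun i => Real.exp (κ' i)) * (fcal W κ' * fcal V κ) =
        fcal W (fun i => Real.exp (κ' i) * κ' i) * fcal V κ := by
      rw [← Matrix.mul_assoc, fcal_mul w1]
    have e6 : (fcal W (fun i => Real.exp (κ' i)) * (fcal V κ * fcal W κ')).trace =
        (fcal W (fun i => κ' i * Real.exp (κ' i)) * fcal V κ).trace := by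
      rw [← Matrix.mul_assoc, Matrix.trace_mul_comm, ← Matrix.mul_assoc, fcal_mul w1]
    rw [Matrix.mul_sub, Matrix.trace_sub]
    simp only [Matrix.sub_mul, Matrix.mul_sub, Matrix.mul_smul, Matrix.trace_sub, Matrix.trace_smul,
      smul_eq_mul, Complex.sub_re, Complex.re_ofReal_mul, e4, e6, fcal_mul h1, fcal_mul w1,
      a1, a2, a3, a4, a5, a6]
    simp only [Finset.mul_sum, ← Finset.sum_sub_distrib]
    refine Finset.sum_congr rfl fun i _ => Finset.sum_congr rfl fun j _ => ?_
    ring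
  have t3' : (Real.exp (b*x) - 1)/b * trQ B (fcal V κ) =
      (Real.exp (b*x) - 1)/(b*x) * ∑ i, ∑ j, p i j * (Real.exp (κ i) * (κ' j - κ i)) := by
    rw [← t3]; field_simp
  have main : ∑ i, ∑ j, p i j * Real.exp (κ' j) ≤ (∑ i, ∑ j, p i j * Real.exp (κ i)) +
      (Real.exp (b*x) - 1)/(b*x) * (∑ i, ∑ j, p i j * (Real.exp (κ i) * (κ' j - κ i)))
      - α * (∑ i, ∑ j, p i j * (Real.exp (κ i) * ((b*x) * (κ' j - κ i) - (κ' j - κ i)^2)))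
      - β * (∑ i, ∑ j, p i j * (Real.exp (κ' j) * ((b*x) * (κ' j - κ i) - (κ' j - κ i)^2))) := by
    simp only [Finset.mul_sum, ← Finset.sum_sub_distrib, ← Finset.sum_add_distrib]
    refine Finset.sum_le_sum fun i _ => Finset.sum_le_sum fun j _ => ?_
    have hpn : 0 ≤ p i j := by simp only [hp]; positivity
    have e : Real.exp (κ' j) = Real.exp (κ i) * Real.exp (κ' j - κ i) := by
      rw [← Real.exp_add]; ring_nf
    rw [e]
    have := mul_le_mul_of_nonneg_left (hd (κ' j - κ i)) (mul_nonneg hpn (Real.exp_pos (κ i)).le)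
    linarith
  rw [hW, t1, t2, t3']
  have := mul_nonneg hα q1
  have := mul_nonneg hβ q2
  linarith

end mats

section prob
open scoped ComplexOrder

lemma exp_le_quad (R x : ℝ) (hR : 0 < R) (hx : x ≤ R) :
    Real.exp x ≤ 1 + x + x^2 / R^2 * (Real.exp R - 1 - R) := by
  have e1 : ∀ x : ℝ, x^2 * ∫ u in (0:ℝ)..1, (1-u) * Real.exp (u*x) = Real.exp x - 1 - x := by
    intro x
    rw [← intervalIntegral.integral_const_mul]
    have := intervalIntegral.integral_eq_sub_of_hasDerivAt (a := (0:ℝ)) (b := 1)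
      (f := fun u => (x * (1-u) + 1) * Real.exp (u*x))
      (f' := fun u => x^2 * ((1-u) * Real.exp (u*x))) (by
        intro u _
        have h1 : HasDerivAt (fun u : ℝ => x * (1-u) + 1) (-x) u := by
          simpa using (((hasDerivAt_id u).const_sub 1).const_mul x).add_const 1
        have h2 : HasDerivAt (fun u : ℝ => u*x) x u := by
          simpa using (hasDerivAt_id u).mul_const x
        refine (h1.mul h2.exp).congr_deriv ?_
        ring) (by apply Continuous.intervalIntegrable; fun_prop)
    rw [this]
    simp
    ring
  have h1 : ∫ u in (0:ℝ)..1, (1-u) * Real.exp (u*x) ≤ ∫ u in (0:ℝ)..1, (1-u) * Real.exp (u*R) := by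
    apply intervalIntegral.integral_mono_on zero_le_one
    · apply Continuous.intervalIntegrable; fun_prop
    · apply Continuous.intervalIntegrable; fun_prop
    · intro u hu
      have := hu.1
      have := hu.2
      apply mul_le_mul_of_nonneg_left _ (by linarith)
      exact Real.exp_le_exp.2 (by nlinarith)
  have h2 := mul_le_mul_of_nonneg_left h1 (sq_nonneg x)
  rw [e1 x] at h2
  rw [← e1 R]
  field_simp at *
  linarith

lemma bennett_scalar {Ω : Type} [MeasurableSpace Ω] (P : Measure Ω) [IsProbabilityMeasure P]
    (X : Ω → ℝ) (hX : Measurable X) (R v : ℝ) (hR : 0 < R) (hb : ∀ᵐ ω ∂P, |X ω| ≤ R)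
    (h0 : ∫ ω, X ω ∂P = 0) (hv : ∫ ω, X ω ^ 2 ∂P ≤ v) :
    ∫ ω, Real.exp (X ω) ∂P ≤ 1 + v / R^2 * (Real.exp R - 1 - R) := by
  have i1 : Integrable X P := Integrable.of_bound hX.aestronglyMeasurable R hb
  have i2 : Integrable (fun ω => X ω ^ 2) P := by
    refine Integrable.of_bound (hX.pow_const 2).aestronglyMeasurable (R^2) ?_
    filter_upwards [hb] with ω h
    rw [Real.norm_eq_abs, abs_pow]
    exact pow_le_pow_left₀ (abs_nonneg _) h 2
  have i3 : Integrable (fun ω => Real.exp (X ω)) P := by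
    refine Integrable.of_bound hX.exp.aestronglyMeasurable (Real.exp R) ?_
    filter_upwards [hb] with ω h
    rw [Real.norm_eq_abs, Real.abs_exp]
    exact Real.exp_le_exp.2 (le_trans (le_abs_self _) h)
  have i4 : Integrable (fun ω => 1 + X ω) P := (integrable_const 1).add i1
  have hc : 0 ≤ (Real.exp R - 1 - R) := by linarith [Real.add_one_le_exp R]
  calc ∫ ω, Real.exp (X ω) ∂P ≤ ∫ ω, (1 + X ω + X ω ^ 2 * (1 / R^2 * (Real.exp R - 1 - R))) ∂P := by
        refine integral_mono_ae i3 (i4.add (i2.mul_const _)) ?_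
        filter_upwards [hb] with ω h
        have := exp_le_quad R (X ω) hR (le_trans (le_abs_self _) h)
        refine this.trans (le_of_eq ?_)
        ring
    _ = 1 + (∫ ω, X ω ^ 2 ∂P) * (1 / R^2 * (Real.exp R - 1 - R)) := by
        rw [integral_add i4 (i2.mul_const _),
          integral_add (integrable_const 1) i1, h0, integral_mul_const]
        simp
    _ ≤ 1 + v * (1 / R^2 * (Real.exp R - 1 - R)) := by gcongr
    _ = _ := by ring

lemma integrable_comp_bdd {Ω : Type} [MeasurableSpace Ω] (P : Measure Ω) [IsProbabilityMeasure P]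
    {n : ℕ} (ξ : Fin n → Ω → ℝ) (hm : ∀ k, Measurable (ξ k)) (C : ℝ)
    (hC : ∀ k, ∀ᵐ ω ∂P, |ξ k ω| ≤ C) (F : (Fin n → ℝ) → ℝ) (hF : Continuous F) :
    Integrable (fun ω => F (fun k => ξ k ω)) P := by
  obtain ⟨M, hM⟩ := (isCompact_univ_pi (fun _ : Fin n => isCompact_Icc (a := -C) (b := C))).exists_bound_of_continuousOn
    hF.continuousOn
  refine Integrable.of_bound (hF.measurable.comp (measurable_pi_lambda _ hm)).aestronglyMeasurable M ?_
  filter_upwards [ae_all_iff.2 hC] with ω h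
  exact hM _ (fun k _ => abs_le.1 (h k))

lemma herm_sum {s n : ℕ} (H0 : Matrix (Fin s) (Fin s) ℂ) (h0 : H0.IsHermitian)
    (B : Fin n → Matrix (Fin s) (Fin s) ℂ) (hB : ∀ k, (B k).IsHermitian) (A : Finset (Fin n))
    (y : Fin n → ℝ) : (H0 + ∑ k ∈ A, (y k : ℂ) • B k).IsHermitian := by
  refine h0.add ?_
  unfold Matrix.IsHermitian
  rw [Matrix.conjTranspose_sum]
  refine Finset.sum_congr rfl fun k _ => ?_
  rw [Matrix.conjTranspose_smul, (hB k).eq]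
  simp

lemma mgf_bound {Ω : Type} [MeasurableSpace Ω] (P : Measure Ω) [IsProbabilityMeasure P]
    {n s : ℕ} (ξ : Fin n → Ω → ℝ) (hm : ∀ k, Measurable (ξ k)) (C : ℝ)
    (hC : ∀ k, ∀ᵐ ω ∂P, |ξ k ω| ≤ C)
    (hind : ∀ k (A : Finset (Fin n)), k ∉ A → IndepFun (fun ω (j : A) => ξ j ω) (ξ k) P)
    (B : Fin n → Matrix (Fin s) (Fin s) ℂ) (hB : ∀ k, (B k).PosSemidef)
    (b : ℝ) (hb : 0 < b) (hBB : ∀ k, ((b:ℂ) • B k - B k * B k).PosSemidef)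
    (c : Fin n → ℝ) (hc : ∀ k, ∫ ω, Real.exp (b * ξ k ω) ∂P ≤ 1 + b * c k) (A : Finset (Fin n)) :
    ∀ H0 : Matrix (Fin s) (Fin s) ℂ, H0.IsHermitian →
    ∫ ω, trE (H0 + ∑ k ∈ A, (ξ k ω : ℂ) • B k) ∂P ≤ trE (H0 + ∑ k ∈ A, (c k : ℂ) • B k) := by
  have hBh : ∀ k, (B k).IsHermitian := fun k => (hB k).isHermitian
  induction A using Finset.induction_on with
  | empty => intro H0 h0; simp
  | insert k A hk ih =>
    intro H0 h0
    set K : (Fin n → ℝ) → Matrix (Fin s) (Fin s) ℂ := fun y => H0 + ∑ k ∈ A, (y k : ℂ) • B k with hK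
    have cK : Continuous K := by
      refine continuous_const.add (continuous_finsetSum _ fun j _ => ?_)
      exact (Complex.continuous_ofReal.comp (continuous_apply j)).smul continuous_const
    have hKh : ∀ y, (K y).IsHermitian := fun y => herm_sum H0 h0 B hBh A y
    set φ : ℝ → ℝ := fun x => (Real.exp (b*x) - 1)/b with hφ
    have cφ : Continuous φ := by fun_prop
    have I1 := integrable_comp_bdd P ξ hm C hC (fun y => trE (K y)) (trE_continuous.comp cK)
    have I2 := integrable_comp_bdd P ξ hm C hC (fun y => trQ (B k) (K y)) ((trQ_continuous _).comp cK)
    have I3 := integrable_comp_bdd P ξ hm C hC (fun y => φ (y k)) (cφ.comp (continuous_apply k))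
    have I4 := integrable_comp_bdd P ξ hm C hC (fun y => trQ (B k) (K y) * φ (y k))
      (((trQ_continuous _).comp cK).mul (cφ.comp (continuous_apply k)))
    have ck : Continuous fun y : Fin n → ℝ => K y + (y k : ℂ) • B k :=
      cK.add ((Complex.continuous_ofReal.comp (continuous_apply k)).smul continuous_const)
    have I5 := integrable_comp_bdd P ξ hm C hC (fun y => trE (K y + (y k : ℂ) • B k))
      (trE_continuous.comp ck)
    have I6 := integrable_comp_bdd P ξ hm C hC (fun y => trE (K y + (c k : ℂ) • B k))
      (trE_continuous.comp (cK.add continuous_const))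
    have hφc : ∫ ω, φ (ξ k ω) ∂P ≤ c k := by
      have Ie := integrable_comp_bdd P ξ hm C hC (fun y => Real.exp (b * y k)) (by fun_prop)
      simp only [hφ]
      rw [integral_div, integral_sub Ie (integrable_const 1)]
      simp only [integral_const, probReal_univ, smul_eq_mul, mul_one]
      rw [div_le_iff₀ hb]
      linarith [hc k]
    have hmul : ∫ ω, trQ (B k) (K (fun j => ξ j ω)) * φ (ξ k ω) ∂P =
        (∫ ω, trQ (B k) (K (fun j => ξ j ω)) ∂P) * ∫ ω, φ (ξ k ω) ∂P := by
      set g : (A → ℝ) → ℝ := fun z => trQ (B k) (H0 + ∑ j : A, (z j : ℂ) • B j) with hg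
      have cg : Continuous g := by
        refine (trQ_continuous _).comp (continuous_const.add (continuous_finsetSum _ fun j _ => ?_))
        exact (Complex.continuous_ofReal.comp (continuous_apply j)).smul continuous_const
      have hgK : ∀ ω, trQ (B k) (K (fun j => ξ j ω)) = g (fun j => ξ j ω) := by
        intro ω
        simp only [hg, hK]
        rw [← Finset.sum_coe_sort A (fun j => ((ξ j ω : ℝ) : ℂ) • B j)]
      simp only [hgK]
      have hI := (hind k A hk).comp cg.measurable cφ.measurable
      exact hI.integral_fun_mul_eq_mul_integral
        (cg.measurable.comp (measurable_pi_lambda _ fun j => hm j)).aestronglyMeasurable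
        (cφ.measurable.comp (hm k)).aestronglyMeasurable
    calc ∫ ω, trE (H0 + ∑ j ∈ insert k A, (ξ j ω : ℂ) • B j) ∂P
        = ∫ ω, trE (K (fun j => ξ j ω) + (ξ k ω : ℂ) • B k) ∂P := by
          refine integral_congr_ae (Filter.Eventually.of_forall fun ω => ?_)
          simp only [hK]
          rw [Finset.sum_insert hk]
          congr 1; abel
      _ ≤ ∫ ω, (trE (K (fun j => ξ j ω)) + trQ (B k) (K (fun j => ξ j ω)) * φ (ξ k ω)) ∂P := by
          refine integral_mono I5 (I1.add I4) fun ω => ?_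
          have := upper (B k) (K (fun j => ξ j ω)) (hKh _) (hBh k) b hb (hBB k) (ξ k ω)
          simp only [hφ]
          linarith
      _ = (∫ ω, trE (K (fun j => ξ j ω)) ∂P) + (∫ ω, trQ (B k) (K (fun j => ξ j ω)) ∂P) * ∫ ω, φ (ξ k ω) ∂P := by
          rw [integral_add I1 I4, hmul]
      _ ≤ (∫ ω, trE (K (fun j => ξ j ω)) ∂P) + (∫ ω, trQ (B k) (K (fun j => ξ j ω)) ∂P) * c k := by
          gcongr
          exact integral_nonneg fun ω => trQ_nonneg _ _ (hKh _) (hB k)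
      _ = ∫ ω, (trE (K (fun j => ξ j ω)) + trQ (B k) (K (fun j => ξ j ω)) * c k) ∂P := by
          rw [integral_add I1 (I2.mul_const _), integral_mul_const]
      _ ≤ ∫ ω, trE (K (fun j => ξ j ω) + (c k : ℂ) • B k) ∂P := by
          refine integral_mono (I1.add (I2.mul_const _)) I6 fun ω => ?_
          have := klein (B k) (K (fun j => ξ j ω)) (hKh _) (hBh k) (c k)
          simp only
          linarith
      _ = ∫ ω, trE ((H0 + (c k : ℂ) • B k) + ∑ j ∈ A, (ξ j ω : ℂ) • B j) ∂P := by
          refine integral_congr_ae (Filter.Eventually.of_forall fun ω => ?_)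
          simp only [hK]
          congr 1; abel
      _ ≤ trE ((H0 + (c k : ℂ) • B k) + ∑ j ∈ A, (c j : ℂ) • B j) := by
          refine ih _ (h0.add ((hBh k).smul ?_))
          simp [IsSelfAdjoint]
      _ = _ := by
          rw [Finset.sum_insert hk]
          congr 1; abel

/-- Quadratic form. -/
noncomputable def qf {s : ℕ} (A : Matrix (Fin s) (Fin s) ℂ) (v : Fin s → ℂ) : ℝ :=
  (star v ⬝ᵥ (A *ᵥ v)).re

lemma qf_add {s : ℕ} (A B : Matrix (Fin s) (Fin s) ℂ) (v : Fin s → ℂ) :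
    qf (A + B) v = qf A v + qf B v := by
  simp [qf, Matrix.add_mulVec]

lemma qf_smul {s : ℕ} (c : ℝ) (A : Matrix (Fin s) (Fin s) ℂ) (v : Fin s → ℂ) :
    qf ((c:ℂ) • A) v = c * qf A v := by
  simp [qf, Matrix.smul_mulVec]

lemma qf_sum {s : ℕ} {ι : Type} (S : Finset ι) (A : ι → Matrix (Fin s) (Fin s) ℂ) (v : Fin s → ℂ) :
    qf (∑ k ∈ S, A k) v = ∑ k ∈ S, qf (A k) v := by
  simp [qf, Matrix.sum_mulVec, dotProduct_sum]

lemma qf_nonneg {s : ℕ} {A : Matrix (Fin s) (Fin s) ℂ} (hA : A.PosSemidef) (v : Fin s → ℂ) :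
    0 ≤ qf A v := by
  have := hA.dotProduct_mulVec_nonneg v
  rw [Complex.le_def] at this
  exact this.1

lemma qf_fcal {s : ℕ} (V : Matrix (Fin s) (Fin s) ℂ) (f : Fin s → ℝ) (v : Fin s → ℂ) :
    qf (fcal V f) v = ∑ i, f i * ‖(Vᴴ *ᵥ v) i‖^2 := by
  unfold qf fcal
  have : star v ⬝ᵥ ((V * diagonal (fun i => (f i : ℂ)) * Vᴴ) *ᵥ v) =
      star (Vᴴ *ᵥ v) ⬝ᵥ (diagonal (fun i => (f i : ℂ)) *ᵥ (Vᴴ *ᵥ v)) := by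
    rw [Matrix.star_mulVec, Matrix.conjTranspose_conjTranspose, ← Matrix.dotProduct_mulVec,
      Matrix.mulVec_mulVec, Matrix.mulVec_mulVec, Matrix.mul_assoc]
  rw [this]
  simp only [dotProduct, Complex.re_sum]
  refine Finset.sum_congr rfl fun i _ => ?_
  rw [Matrix.mulVec_diagonal, ← Complex.normSq_eq_norm_sq, Complex.normSq_apply]
  simp [Complex.mul_re, Complex.mul_im]
  ring

lemma exp_qf_le_trE {s : ℕ} (H : Matrix (Fin s) (Fin s) ℂ) (hH : H.IsHermitian) (v : Fin s → ℂ)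
    (hv : qf 1 v = 1) : Real.exp (qf H v) ≤ trE H := by
  obtain ⟨V, κ, h1, h2, rfl⟩ := exists_diag H hH
  have hw : ∑ i, ‖(Vᴴ *ᵥ v) i‖^2 = 1 := by
    rw [← fcal_one h2, qf_fcal] at hv
    simpa using hv
  rw [trE, fcal_exp h1, fcal_trace h1]
  set c := qf (fcal V κ) v with hc
  have hc' : c = ∑ i, κ i * ‖(Vᴴ *ᵥ v) i‖^2 := qf_fcal _ _ _
  have hle : ∀ i, ‖(Vᴴ *ᵥ v) i‖^2 ≤ 1 := fun i => by
    rw [← hw]; exact Finset.single_le_sum (f := fun i => ‖(Vᴴ *ᵥ v) i‖^2) (fun i _ => by positivity) (Finset.mem_univ i)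
  calc Real.exp c = ∑ i, Real.exp c * (1 + κ i - c) * ‖(Vᴴ *ᵥ v) i‖^2 := by
        have : ∀ i, Real.exp c * (1 + κ i - c) * ‖(Vᴴ *ᵥ v) i‖^2 =
          Real.exp c * (κ i * ‖(Vᴴ *ᵥ v) i‖^2) + Real.exp c * (1 - c) * ‖(Vᴴ *ᵥ v) i‖^2 := fun i => by ring
        simp only [this, Finset.sum_add_distrib, ← Finset.mul_sum, hw, ← hc']
        ring
    _ ≤ ∑ i, Real.exp (κ i) * ‖(Vᴴ *ᵥ v) i‖^2 := by
        refine Finset.sum_le_sum fun i _ => mul_le_mul_of_nonneg_right ?_ (by positivity)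
        have e : Real.exp (κ i) = Real.exp c * Real.exp (κ i - c) := by
          rw [← Real.exp_add]; ring_nf
        rw [e]
        have := Real.add_one_le_exp (κ i - c)
        exact mul_le_mul_of_nonneg_left (by linarith) (Real.exp_pos c).le
    _ ≤ ∑ i, Real.exp (κ i) := by
        refine Finset.sum_le_sum fun i _ => ?_
        exact mul_le_of_le_one_right (Real.exp_pos _).le (hle i)

/-- Eigenvector data. -/
lemma eigvec {s : ℕ} {V : Matrix (Fin s) (Fin s) ℂ} (h1 : Vᴴ * V = 1) (i : Fin s) :
    ∀ f : Fin s → ℝ, qf (fcal V f) (V *ᵥ Pi.single i 1) = f i := by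
  intro f
  rw [qf_fcal, Matrix.mulVec_mulVec, h1, Matrix.one_mulVec]
  rw [Finset.sum_eq_single i]
  · simp
  · intro j _ hj; simp [hj]
  · simp

lemma trE_le {s : ℕ} (H : Matrix (Fin s) (Fin s) ℂ) (hH : H.IsHermitian) (c : ℝ)
    (h : ∀ v, qf H v ≤ c * qf 1 v) : trE H ≤ s * Real.exp c := by
  obtain ⟨V, κ, h1, h2, rfl⟩ := exists_diag H hH
  rw [trE, fcal_exp h1, fcal_trace h1]
  have : ∀ i ∈ Finset.univ, Real.exp (κ i) ≤ Real.exp c := by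
    intro i _
    have := h (V *ᵥ Pi.single i 1)
    rw [eigvec h1, ← fcal_one h2, eigvec h1] at this
    exact Real.exp_le_exp.2 (by linarith)
  simpa using Finset.sum_le_card_nsmul _ _ _ this

lemma trace_inv_lt {s : ℕ} (hs : 0 < s) (H : Matrix (Fin s) (Fin s) ℂ) (hH : H.IsHermitian) (ν : ℝ)
    (hν : 0 < ν) (h : ∀ v, qf 1 v = 1 → ν < qf H v) : (H⁻¹).trace.re < s / ν := by
  obtain ⟨V, κ, h1, h2, rfl⟩ := exists_diag H hH
  have hκ : ∀ i, ν < κ i := by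
    intro i
    have := h (V *ᵥ Pi.single i 1) (by rw [← fcal_one h2, eigvec h1])
    rwa [eigvec h1] at this
  have : (fcal V κ)⁻¹ = fcal V (fun i => (κ i)⁻¹) := by
    apply Matrix.inv_eq_right_inv
    rw [fcal_mul h1, ← fcal_one h2]
    congr 1; ext i
    exact mul_inv_cancel₀ (by linarith [hκ i])
  rw [this, fcal_trace h1]
  have : ∑ i : Fin s, (κ i)⁻¹ < ∑ i : Fin s, ν⁻¹ := by
    refine Finset.sum_lt_sum_of_nonempty ⟨⟨0, hs⟩, Finset.mem_univ _⟩ fun i _ => ?_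
    exact inv_strictAnti₀ hν (hκ i)
  simpa [div_eq_mul_inv] using this

lemma psd_sq {s : ℕ} (B : Matrix (Fin s) (Fin s) ℂ) (hB : B.PosSemidef) (b : ℝ)
    (h : ∀ v, qf B v ≤ b * qf 1 v) : ((b:ℂ) • B - B * B).PosSemidef := by
  obtain ⟨V, κ, h1, h2, rfl⟩ := exists_diag B hB.isHermitian
  have e : (b:ℂ) • fcal V κ - fcal V κ * fcal V κ = fcal V (fun i => (b - κ i) * κ i) := by
    have : (b:ℂ) • fcal V κ = fcal V (fun i => b * κ i) := by
      unfold fcal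
      rw [← Matrix.smul_mul, ← Matrix.mul_smul, ← Matrix.diagonal_smul]
      congr 3; ext i; simp
    rw [this, fcal_mul h1]
    unfold fcal
    rw [← Matrix.sub_mul, ← Matrix.mul_sub, Matrix.diagonal_sub]
    congr 3; ext i; push_cast; ring
  rw [e]
  refine fcal_posSemidef _ _ fun i => mul_nonneg ?_ ?_
  · have := h (V *ᵥ Pi.single i 1)
    rw [eigvec h1, ← fcal_one h2, eigvec h1] at this
    linarith
  · have := qf_nonneg hB (V *ᵥ Pi.single i 1)
    rwa [eigvec h1] at this
end prob

section blocks
open scoped ComplexOrder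

lemma blockOf_blockIdx (nT Q : ℕ) (k : Fin nT) (t : Fin Q) : blockOf nT Q (blockIdx nT Q k t) = k := by
  unfold blockOf blockIdx
  rw [Equiv.symm_apply_apply]

lemma sum_blocks {nT Q : ℕ} (F : Fin (nT * Q) → ℝ) :
    ∑ i, F i = ∑ k, ∑ t, F (blockIdx nT Q k t) := by
  rw [← Fintype.sum_prod_type', ← finProdFinEquiv.sum_comp]
  rfl

/-- Block matrix `B_k = ∑_{i in block k} u_i u_i†`. -/
noncomputable def Bmat {s nT Q : ℕ} (Us : Matrix (Fin (nT * Q)) (Fin s) ℂ) (k : Fin nT) :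
    Matrix (Fin s) (Fin s) ℂ :=
  Usᴴ * diagonal (fun i => if blockOf nT Q i = k then (1:ℂ) else 0) * Us

lemma Bmat_psd {s nT Q : ℕ} (Us : Matrix (Fin (nT * Q)) (Fin s) ℂ) (k : Fin nT) :
    (Bmat Us k).PosSemidef := by
  unfold Bmat
  apply PosSemidef.conjTranspose_mul_mul_same
  apply PosSemidef.diagonal
  intro i
  dsimp
  split_ifs <;> simp

lemma qf_conj {s N : ℕ} (Us : Matrix (Fin N) (Fin s) ℂ) (f : Fin N → ℂ) (v : Fin s → ℂ) :
    qf (Usᴴ * diagonal f * Us) v = ∑ i, (f i).re * ‖(Us *ᵥ v) i‖^2 := by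
  unfold qf
  have : star v ⬝ᵥ ((Usᴴ * diagonal f * Us) *ᵥ v) =
      star (Us *ᵥ v) ⬝ᵥ (diagonal f *ᵥ (Us *ᵥ v)) := by
    rw [Matrix.star_mulVec, ← Matrix.dotProduct_mulVec,
      Matrix.mulVec_mulVec, Matrix.mulVec_mulVec, Matrix.mul_assoc]
  rw [this]
  simp only [dotProduct, Complex.re_sum]
  refine Finset.sum_congr rfl fun i _ => ?_
  rw [Matrix.mulVec_diagonal, ← Complex.normSq_eq_norm_sq, Complex.normSq_apply]
  simp [Complex.mul_re, Complex.mul_im]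
  ring

lemma qf_Bmat {s nT Q : ℕ} (Us : Matrix (Fin (nT * Q)) (Fin s) ℂ) (k : Fin nT) (v : Fin s → ℂ) :
    qf (Bmat Us k) v = ∑ t, ‖(Us *ᵥ v) (blockIdx nT Q k t)‖^2 := by
  unfold Bmat
  rw [qf_conj, sum_blocks, Finset.sum_eq_single k]
  · simp [blockOf_blockIdx]
  · intro j _ hj; simp [blockOf_blockIdx, hj]
  · simp

lemma sum_qf_Bmat {s nT Q : ℕ} (Us : Matrix (Fin (nT * Q)) (Fin s) ℂ) (hUs : Usᴴ * Us = 1)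
    (v : Fin s → ℂ) : ∑ k, qf (Bmat Us k) v = qf 1 v := by
  have h := qf_conj Us (fun _ => 1) v
  rw [Matrix.diagonal_one, Matrix.mul_one, hUs, sum_blocks] at h
  simp only [qf_Bmat, h]; simp

lemma qf_one {s : ℕ} (v : Fin s → ℂ) : qf 1 v = ∑ j, ‖v j‖^2 := by
  have h := qf_conj (1 : Matrix (Fin s) (Fin s) ℂ) (fun _ => 1) v
  simpa using h

lemma qf_Bmat_le {s nT Q : ℕ} (Us : Matrix (Fin (nT * Q)) (Fin s) ℂ) (k : Fin nT)
    (v : Fin s → ℂ) : qf (Bmat Us k) v ≤ (∑ t, rowNormSq Us (blockIdx nT Q k t)) * qf 1 v := by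
  rw [qf_Bmat, Finset.sum_mul, qf_one]
  refine Finset.sum_le_sum fun t _ => ?_
  unfold rowNormSq Matrix.mulVec dotProduct
  calc ‖∑ j, Us (blockIdx nT Q k t) j * v j‖^2 ≤ (∑ j, ‖Us (blockIdx nT Q k t) j‖ * ‖v j‖)^2 := by
        refine pow_le_pow_left₀ (norm_nonneg _) ((norm_sum_le _ _).trans ?_) 2
        simp
    _ ≤ _ := Finset.sum_mul_sq_le_sq_mul_sq _ _ _

lemma conj_G {s nT Q : ℕ} (Us : Matrix (Fin (nT * Q)) (Fin s) ℂ) (q : Fin nT → ℝ) :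
    Usᴴ * diagonal (fun i => ((q (blockOf nT Q i) : ℝ) : ℂ)) * Us = ∑ k, (q k : ℂ) • Bmat Us k := by
  have : diagonal (fun i => ((q (blockOf nT Q i) : ℝ) : ℂ)) =
      ∑ k, (q k : ℂ) • diagonal (fun i => if blockOf nT Q i = k then (1:ℂ) else 0) := by
    ext i j
    rw [Matrix.sum_apply]
    simp only [Matrix.smul_apply, Matrix.diagonal_apply]
    by_cases h : i = j <;> simp [h]
  rw [this, Matrix.mul_sum, Matrix.sum_mul]
  refine Finset.sum_congr rfl fun k _ => ?_
  simp [Bmat]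

lemma indep_blocks {Ω : Type} [MeasurableSpace Ω] (P : Measure Ω) {nT Q : ℕ}
    (E : Fin (nT * Q) → Ω → ℝ) (hEmeas : ∀ i, Measurable (E i)) (hindep : iIndepFun E P)
    (α : Fin nT → ℝ) (β : ℝ) (k : Fin nT) (A : Finset (Fin nT)) (hk : k ∉ A) :
    IndepFun (fun ω (j : A) => α j * (β - ∑ t : Fin Q, E (blockIdx nT Q j t) ω))
      (fun ω => α k * (β - ∑ t : Fin Q, E (blockIdx nT Q k t) ω)) P := by
  classical
  obtain ⟨S1, hS1⟩ : ∃ S1 : Finset (Fin (nT * Q)), ∀ i, i ∈ S1 ↔ blockOf nT Q i ∈ A :=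
    ⟨Finset.univ.filter fun i => blockOf nT Q i ∈ A, by simp⟩
  obtain ⟨S2, hS2⟩ : ∃ S2 : Finset (Fin (nT * Q)), ∀ i, i ∈ S2 ↔ blockOf nT Q i = k :=
    ⟨Finset.univ.filter fun i => blockOf nT Q i = k, by simp⟩
  have hd : Disjoint S1 S2 := by
    rw [Finset.disjoint_left]
    intro i h1 h2
    rw [hS1] at h1
    rw [hS2] at h2
    exact hk (h2 ▸ h1)
  have h := hindep.indepFun_finset S1 S2 hd hEmeas
  have m1 : ∀ (j : A) (t : Fin Q), blockIdx nT Q j t ∈ S1 := fun j t => by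
    simp [hS1, blockOf_blockIdx]
  have m2 : ∀ (t : Fin Q), blockIdx nT Q k t ∈ S2 := fun t => by
    simp [hS2, blockOf_blockIdx]
  have f1 : Measurable (fun (z : S1 → ℝ) (j : A) =>
      α j * (β - ∑ t, z ⟨blockIdx nT Q j t, m1 j t⟩)) := by fun_prop
  have f2 : Measurable (fun (z : S2 → ℝ) =>
      α k * (β - ∑ t, z ⟨blockIdx nT Q k t, m2 t⟩)) := by fun_prop
  exact h.comp f1 f2

end blocks

section mainproof
open scoped ComplexOrder

set_option maxHeartbeats 4000000 in
theorem main_aux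
    {Ω : Type} [MeasureSpace Ω] [IsProbabilityMeasure (ℙ : Measure Ω)]
    (s nT Q : ℕ) (hs : 0 < s) (hnT : 0 < nT) (hQ : 0 < Q) (hsN : s ≤ nT * Q)
    (Us : Matrix (Fin (nT * Q)) (Fin s) ℂ) (hUs : Usᴴ * Us = 1)
    (ηL ηU : ℝ) (hηL : ηL = ⨅ i, rowNormSq Us i) (hηU : ηU = ⨆ i, rowNormSq Us i)
    (hηLpos : 0 < ηL)
    (Px σw2 : ℝ) (hPx : 0 < Px) (hσ : 0 < σw2)
    (μE ϱE rE : ℝ) (hμE : 0 < μE) (hϱE : 0 < ϱE) (hrE : 1 ≤ rE)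
    (E : Fin (nT * Q) → Ω → ℝ) (hEmeas : ∀ i, Measurable (E i))
    (hindep : iIndepFun E ℙ)
    (hident : ∀ i j, IdentDistrib (E i) (E j) ℙ ℙ)
    (hmean : ∀ i, ∫ ω, E i ω = μE)
    (hvar : ∀ i, variance (E i) ℙ = ϱE)
    (hbdd : ∀ i, ∀ᵐ ω, 0 ≤ E i ω ∧ E i ω ≤ rE * μE)
    (S : Fin nT → ℝ)
    (hS : ∀ k, S k = ∑ t : Fin Q, Px / s * rowNormSq Us (blockIdx nT Q k t))
    (p : Fin nT → Ω → ℝ)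
    (hp : ∀ k ω, p k ω = (∑ t : Fin Q, E (blockIdx nT Q k t) ω) / S k)
    (G : Ω → Matrix (Fin (nT * Q)) (Fin (nT * Q)) ℂ)
    (hG : ∀ ω, G ω = Matrix.diagonal fun i => ((p (blockOf nT Q i) ω : ℝ) : ℂ))
    (ε : Ω → ℝ)
    (hε : ∀ ω, ε ω =
      ((((s / Px : ℝ) : ℂ) • (1 : Matrix (Fin s) (Fin s) ℂ) +
        ((σw2 : ℝ) : ℂ)⁻¹ • (Usᴴ * G ω * Us))⁻¹).trace.re)
    (r : ℝ) (hr0 : 0 < r) (hr1 : r ≤ 1 / ηU)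
    (errI μI ϱI : ℝ)
    (herrI : errI = Px / (1 + 1 / σw2 * μE * (1 / ηU - r)))
    (hμI : μI = 1 / ηL * max (rE - 1) 1 * min (Q * ηU) 1)
    (hϱI : ϱI = ϱE / μE ^ 2 * (1 / ηL ^ 2) * (1 / Q) * min (Q * ηU) 1) :
    ENNReal.ofReal (1 - fbt s μI ϱI r) ≤ ℙ {ω | ε ω < errI} := by
  have hN : 0 < nT * Q := Nat.mul_pos hnT hQ
  have : Nonempty (Fin (nT * Q)) := ⟨⟨0, hN⟩⟩
  have hQ' : (0:ℝ) < Q := by exact_mod_cast hQ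
  have hs' : (0:ℝ) < s := by exact_mod_cast hs
  have hLi : ∀ i, ηL ≤ rowNormSq Us i := fun i => hηL ▸ ciInf_le (Set.finite_range _).bddBelow i
  have hUi : ∀ i, rowNormSq Us i ≤ ηU := fun i => hηU ▸ le_ciSup (Set.finite_range _).bddAbove i
  have hηU0 : 0 < ηU := hηLpos.trans_le ((hLi ⟨0, hN⟩).trans (hUi ⟨0, hN⟩))
  set T : Fin nT → ℝ := fun k => ∑ t : Fin Q, rowNormSq Us (blockIdx nT Q k t) with hT
  have hTL : ∀ k, Q * ηL ≤ T k := by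
    intro k
    have := Finset.card_nsmul_le_sum Finset.univ (fun t : Fin Q => rowNormSq Us (blockIdx nT Q k t)) ηL
      (fun t _ => hLi _)
    simpa using this
  have hTU : ∀ k, T k ≤ Q * ηU := by
    intro k
    have := Finset.sum_le_card_nsmul Finset.univ (fun t : Fin Q => rowNormSq Us (blockIdx nT Q k t)) ηU
      (fun t _ => hUi _)
    simpa using this
  have hT0 : ∀ k, 0 < T k := fun k => (mul_pos hQ' hηLpos).trans_le (hTL k)
  set b : ℝ := min (Q * ηU) 1 with hb
  have hb0 : 0 < b := lt_min (by positivity) one_pos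
  have hm1 : 1 ≤ max (rE - 1) 1 := le_max_right _ _
  set m : ℝ := max (rE - 1) 1 with hm
  have hμI0 : 0 < μI := by rw [hμI]; positivity
  have hϱI0 : 0 < ϱI := by rw [hϱI]; positivity
  set B : Fin nT → Matrix (Fin s) (Fin s) ℂ := fun k => Bmat Us k with hB
  have hBpsd : ∀ k, (B k).PosSemidef := fun k => Bmat_psd Us k
  have hq1 : ∀ v : Fin s → ℂ, 0 ≤ qf 1 v := fun v => by rw [qf_one]; positivity
  have hBle : ∀ k v, qf (B k) v ≤ b * qf 1 v := by
    intro k v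
    rw [hb]
    rcases min_choice (Q * ηU) 1 with h | h <;> rw [h]
    · exact (qf_Bmat_le Us k v).trans (mul_le_mul_of_nonneg_right (hTU k) (hq1 v))
    · rw [one_mul, ← sum_qf_Bmat Us hUs v]
      exact Finset.single_le_sum (f := fun k => qf (Bmat Us k) v) (fun k _ => qf_nonneg (hBpsd k) v)
        (Finset.mem_univ k)
  have hBB : ∀ k, ((b:ℂ) • B k - B k * B k).PosSemidef := fun k => psd_sq _ (hBpsd k) b (hBle k)
  set L : ℝ := Real.log (1 + μI * r / ϱI) with hL
  have hL0 : 0 < L := Real.log_pos (by have : 0 < μI * r / ϱI := by positivity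
                                       linarith)
  set θ : ℝ := L / (μE * μI) with hθ
  have hθ0 : 0 < θ := by positivity
  set Y : Fin nT → Ω → ℝ := fun k ω => ∑ t : Fin Q, E (blockIdx nT Q k t) ω with hY
  have hYm : ∀ k, Measurable (Y k) := fun k => Finset.measurable_fun_sum _ fun t _ => hEmeas _
  set ξ : Fin nT → Ω → ℝ := fun k ω => θ / T k * (Q * μE - Y k ω) with hξ
  have hξm : ∀ k, Measurable (ξ k) := fun k => (measurable_const.sub (hYm k)).const_mul _
  have hEi : ∀ i, MemLp (E i) 2 ℙ := by
    intro i
    refine MemLp.of_bound (hEmeas i).aestronglyMeasurable (rE * μE) ?_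
    filter_upwards [hbdd i] with ω h
    rw [Real.norm_eq_abs, abs_of_nonneg h.1]; exact h.2
  have hEint : ∀ i, Integrable (E i) ℙ := fun i => (hEi i).integrable (by norm_num)
  have hYmean : ∀ k, ∫ ω, Y k ω = Q * μE := by
    intro k
    simp only [hY]
    rw [integral_finsetSum _ (fun t _ => hEint _)]
    simp [hmean]
  have hYi : ∀ k, Integrable (Y k) ℙ := fun k => integrable_finsetSum _ fun t _ => hEint _
  have hYvar : ∀ k, ∫ ω, (Y k ω - Q * μE)^2 = Q * ϱE := by
    intro k
    have h1 : variance (Y k) ℙ = Q * ϱE := by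
      have : Y k = ∑ t : Fin Q, E (blockIdx nT Q k t) := by ext ω; simp [hY]
      rw [this, IndepFun.variance_sum (fun t _ => hEi _)]
      · simp [hvar]
      · intro t _ t' _ htt
        refine hindep.indepFun fun h => htt ?_
        simpa [blockIdx] using h
    rw [variance_eq_integral (hYm k).aemeasurable, hYmean] at h1
    exact h1
  have hYb : ∀ k, ∀ᵐ ω, |Q * μE - Y k ω| ≤ Q * μE * m := by
    intro k
    filter_upwards [ae_all_iff.2 hbdd] with ω h
    have a1 : 0 ≤ Y k ω := Finset.sum_nonneg fun t _ => (h _).1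
    have a2 : Y k ω ≤ Q * (rE * μE) := by
      have := Finset.sum_le_card_nsmul Finset.univ (fun t : Fin Q => E (blockIdx nT Q k t) ω) (rE * μE)
        (fun t _ => (h _).2)
      simpa using this
    have hmr : rE - 1 ≤ m := le_max_left _ _
    have hQμ : 0 < Q * μE := by positivity
    rw [abs_le]
    constructor <;> nlinarith
  have hξb : ∀ k, ∀ᵐ ω, |b * ξ k ω| ≤ L := by
    intro k
    filter_upwards [hYb k] with ω h
    have hT0k := hT0 k
    have e : L = b * (θ / (Q * ηL) * (Q * μE * m)) := by
      rw [hθ, hμI]; field_simp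
    rw [e, abs_mul, abs_of_pos hb0]
    refine mul_le_mul_of_nonneg_left ?_ hb0.le
    simp only [hξ]
    rw [abs_mul, abs_of_pos (div_pos hθ0 hT0k)]
    gcongr
    exact hTL k
  have hξb' : ∀ k, ∀ᵐ ω, |ξ k ω| ≤ L / b := by
    intro k
    filter_upwards [hξb k] with ω h
    rw [abs_mul, abs_of_pos hb0] at h
    rw [le_div_iff₀ hb0]; linarith
  set c : ℝ := ϱI / μI^2 * (Real.exp L - 1 - L) with hc
  have hmgf : ∀ k, ∫ ω, Real.exp (b * ξ k ω) ≤ 1 + b * c := by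
    intro k
    have hT0k := hT0 k
    have := bennett_scalar (ℙ : Measure Ω) (fun ω => b * ξ k ω) ((hξm k).const_mul b) L
      (L^2 * b * ϱI / μI^2) hL0 (hξb k) ?_ ?_
    · refine this.trans (le_of_eq ?_)
      rw [hc]; field_simp
    · simp only [hξ]
      rw [integral_const_mul, integral_const_mul, integral_sub (integrable_const _) (hYi k), hYmean]
      simp
    · have e : ∀ ω, (b * ξ k ω)^2 = (b * (θ / T k))^2 * (Y k ω - Q * μE)^2 := by
        intro ω; simp only [hξ]; ring
      simp only [e]
      rw [integral_const_mul, hYvar]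
      have e2 : L^2 * b * ϱI / μI^2 = (b * (θ / (Q * ηL)))^2 * (Q * ϱE) := by
        rw [hθ, hϱI]; field_simp
      rw [e2]
      gcongr
      exact hTL k
  have hind : ∀ k (A : Finset (Fin nT)), k ∉ A → IndepFun (fun ω (j : A) => ξ j ω) (ξ k) ℙ :=
    fun k A hk => indep_blocks ℙ E hEmeas hindep (fun j => θ / T j) (Q * μE) k A hk
  have hmain := mgf_bound (ℙ : Measure Ω) ξ hξm (L / b) hξb' hind B hBpsd b hb0 hBB (fun _ => c) hmgf
    Finset.univ 0 Matrix.isHermitian_zero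
  have hBh : ∀ k, (B k).IsHermitian := fun k => (hBpsd k).isHermitian
  have hherm : ∀ y : Fin nT → ℝ, (∑ k, (y k : ℂ) • B k).IsHermitian := fun y => by
    simpa using herm_sum 0 Matrix.isHermitian_zero B hBh Finset.univ y
  simp only [zero_add] at hmain
  have hup : trE (∑ k, (c:ℂ) • B k) ≤ s * Real.exp c := by
    refine trE_le _ (hherm fun _ => c) c fun v => le_of_eq ?_
    rw [qf_sum]
    simp only [qf_smul, ← Finset.mul_sum]
    rw [sum_qf_Bmat Us hUs v]
  set Z : Ω → ℝ := fun ω => trE (∑ k, (ξ k ω : ℂ) • B k) with hZ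
  have hZi : Integrable Z ℙ := by
    refine integrable_comp_bdd (ℙ : Measure Ω) ξ hξm (L / b) hξb' (fun y => trE (∑ k, (y k : ℂ) • B k)) ?_
    refine trE_continuous.comp (continuous_finsetSum _ fun j _ => ?_)
    exact (Complex.continuous_ofReal.comp (continuous_apply j)).smul continuous_const
  have hZ0 : ∀ ω, 0 ≤ Z ω := fun ω => trE_nonneg _ (hherm fun k => ξ k ω)
  have hmarkov := mul_meas_ge_le_integral_of_nonneg (Filter.Eventually.of_forall hZ0) hZi
    (Real.exp (θ * (μE * r)))
  -- deterministic inclusion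
  set a : ℝ := μE * (1 / ηU - r) with ha
  have ha0 : 0 ≤ a := mul_nonneg hμE.le (by linarith)
  have hincl : {ω | ε ω < errI}ᶜ ⊆ {ω | Real.exp (θ * (μE * r)) ≤ Z ω} := by
    intro ω hω
    simp only [Set.mem_compl_iff, Set.mem_setOf_eq] at hω ⊢
    by_contra hcon
    apply hω
    set H : Matrix (Fin s) (Fin s) ℂ := ((s / Px : ℝ) : ℂ) • (1 : Matrix (Fin s) (Fin s) ℂ) +
        ((σw2 : ℝ) : ℂ)⁻¹ • (Usᴴ * G ω * Us) with hH
    have hHe : H = ((s / Px : ℝ) : ℂ) • (1 : Matrix (Fin s) (Fin s) ℂ) +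
        ((σw2⁻¹ : ℝ) : ℂ) • ∑ k, (p k ω : ℂ) • B k := by
      rw [hH, hG, conj_G Us (fun k => p k ω)]
      push_cast; rfl
    have hHh : H.IsHermitian := by
      rw [hHe]
      refine (Matrix.isHermitian_one.smul ?_).add ((hherm fun k => p k ω).smul ?_)
      · exact Complex.conj_ofReal _
      · exact Complex.conj_ofReal _
    rw [hε, herrI]
    have e : Px / (1 + 1 / σw2 * μE * (1 / ηU - r)) = s / (s / Px * (1 + σw2⁻¹ * a)) := by
      rw [ha, show 1 / σw2 * μE * (1 / ηU - r) = σw2⁻¹ * (μE * (1 / ηU - r)) by ring]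
      rw [← ha]
      have : 0 < 1 + σw2⁻¹ * a := by positivity
      field_simp
    rw [e]
    refine trace_inv_lt hs H hHh _ (by positivity) fun v hv => ?_
    by_contra hle
    push Not at hle
    apply hcon
    refine le_trans ?_ (exp_qf_le_trE _ (hherm fun k => ξ k ω) v hv)
    refine Real.exp_le_exp.2 ?_
    have hβs : ∑ k, qf (B k) v = 1 := by rw [← hv]; exact sum_qf_Bmat Us hUs v
    have hβ0 : ∀ k, 0 ≤ qf (B k) v := fun k => qf_nonneg (hBpsd k) v
    rw [hHe, qf_add, qf_smul, qf_smul, qf_sum, hv] at hle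
    simp only [qf_smul] at hle
    have hpk : ∀ k, p k ω = s / Px * (Y k ω / T k) := by
      intro k
      have hT0k := hT0 k
      rw [hp, hS, ← Finset.mul_sum]
      change Y k ω / (Px / s * T k) = _
      field_simp
    simp only [hpk, mul_assoc, ← Finset.mul_sum] at hle
    have hle2 : ∑ k, Y k ω / T k * qf (B k) v ≤ a := by
      have : s / Px * (σw2⁻¹ * ∑ k, Y k ω / T k * qf (B k) v) ≤ s / Px * (σw2⁻¹ * a) := by
        linarith
      have h1 := le_of_mul_le_mul_left this (by positivity)
      exact le_of_mul_le_mul_left h1 (by positivity)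
    rw [qf_sum]
    simp only [qf_smul]
    have hge : ∑ k, (μE / ηU) * qf (B k) v ≤ ∑ k, Q * μE / T k * qf (B k) v := by
      refine Finset.sum_le_sum fun k _ => mul_le_mul_of_nonneg_right ?_ (hβ0 k)
      rw [div_le_div_iff₀ hηU0 (hT0 k)]
      have := hTU k
      nlinarith
    rw [← Finset.mul_sum, hβs] at hge
    have e3 : ∑ k, ξ k ω * qf (B k) v =
        θ * (∑ k, Q * μE / T k * qf (B k) v - ∑ k, Y k ω / T k * qf (B k) v) := by
      rw [← Finset.sum_sub_distrib, Finset.mul_sum]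
      refine Finset.sum_congr rfl fun k _ => ?_
      simp only [hξ]; ring
    rw [e3]
    refine mul_le_mul_of_nonneg_left ?_ hθ0.le
    have : a = μE / ηU - μE * r := by rw [ha]; ring
    linarith
  -- final computation
  have hfin : s * Real.exp c / Real.exp (θ * (μE * r)) ≤ fbt s μI ϱI r := by
    unfold fbt hfun
    rw [mul_div_assoc, ← Real.exp_sub]
    have hexpL : Real.exp L = 1 + μI * r / ϱI := by
      rw [hL, Real.exp_log (by positivity)]
    have : c - θ * (μE * r) = -(ϱI / μI^2) * ((1 + μI * r / ϱI) * L - μI * r / ϱI) := by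
      rw [hc, hexpL, hθ]
      field_simp
      ring
    rw [this]
    have := Real.exp_pos (-(ϱI / μI^2) * ((1 + μI * r / ϱI) * L - μI * r / ϱI))
    nlinarith [mul_pos hs' this]
  have hreal : (ℙ : Measure Ω).real {ω | Real.exp (θ * (μE * r)) ≤ Z ω} ≤ fbt s μI ϱI r := by
    refine le_trans ?_ hfin
    rw [le_div_iff₀ (Real.exp_pos _)]
    linarith
  have hcompl : (ℙ : Measure Ω) {ω | ε ω < errI}ᶜ ≤ ENNReal.ofReal (fbt s μI ϱI r) := by
    refine (measure_mono hincl).trans ?_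
    rw [← ofReal_measureReal]
    exact ENNReal.ofReal_le_ofReal hreal
  rw [ENNReal.ofReal_sub _ (measureReal_nonneg.trans hreal), ENNReal.ofReal_one, tsub_le_iff_right]
  calc (1 : ENNReal) = ℙ (Set.univ : Set Ω) := measure_univ.symm
    _ = ℙ ({ω | ε ω < errI} ∪ {ω | ε ω < errI}ᶜ) := by rw [Set.union_compl_self]
    _ ≤ ℙ {ω | ε ω < errI} + ℙ {ω | ε ω < errI}ᶜ := measure_union_le _ _
    _ ≤ _ := by gcongr

end mainproof

/-- Bound I for the energy-harvesting block-transmission model: for every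
`r ∈ (0, 1/η_U]`, `P(ε < err_I) ≥ 1 − f_bt(μ_I, ϱ_I, r)` with
`err_I = P_x/(1 + (μ_E/σ_w²)(1/η_U − r))`,
`μ_I = (1/η_L)·max{r_E − 1, 1}·min{Q·η_U, 1}` and
`ϱ_I = (ϱ_E/μ_E²)·(1/η_L²)·(1/Q)·min{Q·η_U, 1}`. -/
theorem stmt_0
    {Ω : Type} [MeasureSpace Ω] [IsProbabilityMeasure (ℙ : Measure Ω)]
    (s nT Q : ℕ) (hs : 0 < s) (hnT : 0 < nT) (hQ : 0 < Q) (hsN : s ≤ nT * Q)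
    (Us : Matrix (Fin (nT * Q)) (Fin s) ℂ) (hUs : Usᴴ * Us = 1)
    (ηL ηU : ℝ) (hηL : ηL = ⨅ i, rowNormSq Us i) (hηU : ηU = ⨆ i, rowNormSq Us i)
    (hηLpos : 0 < ηL)
    (Px σw2 : ℝ) (hPx : 0 < Px) (hσ : 0 < σw2)
    (μE ϱE rE : ℝ) (hμE : 0 < μE) (hϱE : 0 < ϱE) (hrE : 1 ≤ rE)
    (E : Fin (nT * Q) → Ω → ℝ) (hEmeas : ∀ i, Measurable (E i))
    (hindep : iIndepFun E ℙ)
    (hident : ∀ i j, IdentDistrib (E i) (E j) ℙ ℙ)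
    (hmean : ∀ i, ∫ ω, E i ω = μE)
    (hvar : ∀ i, variance (E i) ℙ = ϱE)
    (hbdd : ∀ i, ∀ᵐ ω, 0 ≤ E i ω ∧ E i ω ≤ rE * μE)
    (S : Fin nT → ℝ)
    (hS : ∀ k, S k = ∑ t : Fin Q, Px / s * rowNormSq Us (blockIdx nT Q k t))
    (p : Fin nT → Ω → ℝ)
    (hp : ∀ k ω, p k ω = (∑ t : Fin Q, E (blockIdx nT Q k t) ω) / S k)
    (G : Ω → Matrix (Fin (nT * Q)) (Fin (nT * Q)) ℂ)
    (hG : ∀ ω, G ω = Matrix.diagonal fun i => ((p (blockOf nT Q i) ω : ℝ) : ℂ))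
    (ε : Ω → ℝ)
    (hε : ∀ ω, ε ω =
      ((((s / Px : ℝ) : ℂ) • (1 : Matrix (Fin s) (Fin s) ℂ) +
        ((σw2 : ℝ) : ℂ)⁻¹ • (Usᴴ * G ω * Us))⁻¹).trace.re)
    (r : ℝ) (hr0 : 0 < r) (hr1 : r ≤ 1 / ηU)
    (errI μI ϱI : ℝ)
    (herrI : errI = Px / (1 + 1 / σw2 * μE * (1 / ηU - r)))
    (hμI : μI = 1 / ηL * max (rE - 1) 1 * min (Q * ηU) 1)
    (hϱI : ϱI = ϱE / μE ^ 2 * (1 / ηL ^ 2) * (1 / Q) * min (Q * ηU) 1) :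
    ENNReal.ofReal (1 - fbt s μI ϱI r) ≤ ℙ {ω | ε ω < errI} := by
  exact main_aux s nT Q hs hnT hQ hsN Us hUs ηL ηU hηL hηU hηLpos Px σw2 hPx hσ μE ϱE rE hμE hϱE hrE E hEmeas hindep hident hmean hvar hbdd S hS p hp G hG ε hε r hr0 hr1 errI μI ϱI herrI hμI hϱI
end

section
/- Under the equidistant sample transmission model for low-pass circularly wide-sense stationary signals, for every r in the interval (0, 1), the estimation error satisfies P(ε < err_I^u) ≥ 1 − f_bt(μ_I^u, ϱ_I^u, r), where err_I^u = P_x / (1 + (μ_E/σ_w²)·(N/s)·(1 − r)), μ_I^u = max{r_E − 1, 1}, and ϱ_I^u = (ϱ_E/μ_E²)·(s/N). -/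
open Matrix Finset MeasureTheory ProbabilityTheory

/-- The `n×n` DFT matrix, `[F^n]_{tk} = (1/√n)·exp(−j·(2π/n)·(t−1)(k−1))` (0-based indices). -/
noncomputable def dftMatrix (n : ℕ) : Matrix (Fin n) (Fin n) ℂ :=
  Matrix.of fun t k =>
    (1 / (Real.sqrt n : ℂ)) *
      Complex.exp (-Complex.I * ((2 * Real.pi / n : ℝ) : ℂ) * (t.1 : ℂ) * (k.1 : ℂ))

lemma aux_exp_bound {x c : ℝ} (hc : 0 < c) (hx : x ≤ c) :
    Real.exp x ≤ 1 + x + x ^ 2 / c ^ 2 * (Real.exp c - 1 - c) := by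
  rcases le_total 0 x with h0 | h0
  · have key : ∀ y : ℝ, HasSum (fun n : ℕ => y ^ (n + 2) / ((n + 2).factorial : ℝ))
        (Real.exp y - 1 - y) := by
      intro y
      have h := NormedSpace.expSeries_div_hasSum_exp (𝔸 := ℝ) y
      rw [← Real.exp_eq_exp_ℝ, ← hasSum_nat_add_iff' 2] at h
      have e : ∑ i ∈ Finset.range 2, y ^ i / ((i.factorial : ℕ) : ℝ) = 1 + y := by
        simp [Finset.sum_range_succ]
      rw [e, ← sub_sub] at h
      exact h
    have h1 := key x
    have h2 := (key c).mul_left (x ^ 2 / c ^ 2)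
    have h3 := hasSum_le (fun n => ?_) h1 h2
    · linarith
    · rw [pow_add x, pow_add c]
      have : x ^ 2 / c ^ 2 * (c ^ n * c ^ 2 / ((n + 2).factorial : ℝ))
          = c ^ n * x ^ 2 / ((n + 2).factorial : ℝ) := by field_simp
      rw [this]
      gcongr
  · have h1 : Real.exp x ≤ 1 + x + x ^ 2 / 2 := by
      have h := Real.quadratic_le_exp_of_nonneg (x := -x) (by linarith)
      have hm : Real.exp x * Real.exp (-x) = 1 := by rw [← Real.exp_add]; simp
      have hp := Real.exp_pos x
      have hp2 : 0 < 1 + x + x ^ 2 / 2 := by nlinarith [sq_nonneg (x + 1)]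
      have : Real.exp x * (1 + -x + (-x) ^ 2 / 2) ≤ 1 := by
        exact (mul_le_mul_of_nonneg_left h hp.le).trans hm.le
      have h4 : (1 + x + x ^ 2 / 2) * (1 + -x + (-x) ^ 2 / 2) ≥ 1 := by
        nlinarith [sq_nonneg (x ^ 2)]
      have h5 : 0 < 1 + -x + (-x) ^ 2 / 2 := by nlinarith [sq_nonneg x]
      by_contra hcon
      push Not at hcon
      nlinarith [mul_lt_mul_of_pos_right hcon h5]
    have h2 := Real.quadratic_le_exp_of_nonneg hc.le
    have h3 : x ^ 2 / c ^ 2 * (c ^ 2 / 2) ≤ x ^ 2 / c ^ 2 * (Real.exp c - 1 - c) := by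
      gcongr; linarith
    have h4 : x ^ 2 / c ^ 2 * (c ^ 2 / 2) = x ^ 2 / 2 := by field_simp
    linarith

lemma aux_mgf {Ω : Type} [MeasureSpace Ω] [IsProbabilityMeasure (ℙ : Measure Ω)]
    (X : Ω → ℝ) (hX : Measurable X) (b B v : ℝ) (hb : 0 < b)
    (hub : ∀ᵐ ω, |X ω| ≤ B ∧ X ω ≤ b) (hm : ∫ ω, X ω = 0) (hv : ∫ ω, X ω ^ 2 = v)
    (l : ℝ) (hl : 0 < l) :
    Integrable (fun ω => Real.exp (l * X ω)) ℙ ∧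
    mgf X ℙ l ≤ Real.exp (v / b ^ 2 * (Real.exp (l * b) - 1 - l * b)) := by
  have hi : Integrable (fun ω => Real.exp (l * X ω)) ℙ := by
    refine Integrable.of_bound (by fun_prop) (Real.exp (l * b)) ?_
    filter_upwards [hub] with ω h
    rw [Real.norm_eq_abs, abs_of_pos (Real.exp_pos _)]
    gcongr
    exact h.2
  refine ⟨hi, ?_⟩
  have hi1 : Integrable X ℙ := by
    refine Integrable.of_bound (by fun_prop) B ?_
    filter_upwards [hub] with ω h using h.1
  have hi2 : Integrable (fun ω => X ω ^ 2) ℙ := by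
    refine Integrable.of_bound (by fun_prop) (B ^ 2) ?_
    filter_upwards [hub] with ω h
    rw [Real.norm_eq_abs, abs_pow]
    gcongr
    exact h.1
  set K := (Real.exp (l * b) - 1 - l * b) / b ^ 2 with hK
  have h1 : mgf X ℙ l ≤ ∫ ω, (1 + l * X ω + K * X ω ^ 2) := by
    refine integral_mono_ae hi (by fun_prop) ?_
    filter_upwards [hub] with ω h
    have := aux_exp_bound (x := l * X ω) (c := l * b) (by positivity)
      (by gcongr; exact h.2)
    refine this.trans (le_of_eq ?_)
    rw [hK]
    field_simp
  have h2 : ∫ ω, (1 + l * X ω + K * X ω ^ 2) = 1 + K * v := by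
    rw [integral_add (by fun_prop) (by fun_prop), integral_add (by fun_prop) (by fun_prop),
      integral_const_mul, integral_const_mul, hm, hv]
    simp
  rw [h2] at h1
  have h3 : v / b ^ 2 * (Real.exp (l * b) - 1 - l * b) = K * v := by rw [hK]; ring
  rw [h3]
  linarith [Real.add_one_le_exp (K * v)]

lemma aux_bennett {Ω : Type} [MeasureSpace Ω] [IsProbabilityMeasure (ℙ : Measure Ω)]
    (Q : ℕ) (X : Fin Q → Ω → ℝ) (hX : ∀ i, Measurable (X i)) (hind : iIndepFun X ℙ)
    (b B v : ℝ) (hb : 0 < b) (hv0 : 0 < v)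
    (hub : ∀ i, ∀ᵐ ω, |X i ω| ≤ B ∧ X i ω ≤ b) (hm : ∀ i, ∫ ω, X i ω = 0)
    (hv : ∀ i, ∫ ω, X i ω ^ 2 = v / Q) (hQ : 0 < Q) (r : ℝ) (hr : 0 < r) :
    (ℙ : Measure Ω).real {ω | r ≤ ∑ i, X i ω} ≤
      Real.exp (-(v / b ^ 2) * hfun (b * r / v)) := by
  set a := b * r / v with ha
  have ha0 : 0 < a := by positivity
  set l := Real.log (1 + a) / b with hl
  have hlog : 0 < Real.log (1 + a) := Real.log_pos (by linarith)
  have hl0 : 0 < l := by positivity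
  have hlb : l * b = Real.log (1 + a) := by rw [hl]; field_simp
  have hQ' : (Q : ℝ) ≠ 0 := by positivity
  have h0 := fun i => aux_mgf (X i) (hX i) b B (v / Q) hb (hub i) (hm i) (hv i) l hl0
  have h1 := measure_ge_le_exp_mul_mgf (μ := (ℙ : Measure Ω)) (X := ∑ i, X i) r hl0.le
    (hind.integrable_exp_mul_sum hX (fun i _ => (h0 i).1))
  rw [hind.mgf_sum hX] at h1
  have h2 : ∏ i, mgf (X i) ℙ l ≤
      ∏ i : Fin Q, Real.exp (v / Q / b ^ 2 * (Real.exp (l * b) - 1 - l * b)) :=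
    Finset.prod_le_prod (fun i _ => mgf_nonneg) (fun i _ => (h0 i).2)
  rw [Finset.prod_const, Finset.card_univ, Fintype.card_fin, ← Real.exp_nat_mul] at h2
  have h3 := h1.trans (mul_le_mul_of_nonneg_left h2 (Real.exp_pos _).le)
  simp only [Finset.sum_apply] at h3
  refine h3.trans (le_of_eq ?_)
  rw [← Real.exp_add, hlb, Real.exp_log (by linarith), hfun]
  congr 1
  have hr' : r = a * v / b := by rw [ha]; field_simp
  rw [hr', hl]
  field_simp
  ring

lemma aux_V (s Q : ℕ) (hs : 0 < s) (hQ : 0 < Q) (td : Fin Q)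
    (V : Matrix (Fin s) (Fin s) ℂ)
    (hV : ∀ k l, V k l = (1 / (Real.sqrt ((s * Q : ℕ) : ℝ) : ℂ)) *
      Complex.exp (-Complex.I * ((2 * Real.pi / ((s * Q : ℕ) : ℝ) : ℝ) : ℂ) *
        ((blockIdx s Q k td).1 : ℂ) * (l.1 : ℂ))) :
    Vᴴ * V = ((Q : ℂ)⁻¹) • (1 : Matrix (Fin s) (Fin s) ℂ) := by
  have hsC : (s : ℂ) ≠ 0 := by exact_mod_cast hs.ne'
  have hQC : (Q : ℂ) ≠ 0 := by exact_mod_cast hQ.ne'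
  have hsq : ((Real.sqrt ((s * Q : ℕ) : ℝ) : ℂ)) * (Real.sqrt ((s * Q : ℕ) : ℝ) : ℂ)
      = (s : ℂ) * Q := by
    rw [← Complex.ofReal_mul, Real.mul_self_sqrt (by positivity)]
    push_cast; rfl
  ext a b
  set z : ℂ := Complex.exp (2 * Real.pi * Complex.I * (((a.1 : ℂ) - b.1) / s)) with hz
  set w : ℂ := Complex.exp (2 * Real.pi * Complex.I * ((td.1 : ℂ) * ((a.1 : ℂ) - b.1) / (s * Q)))
    with hw
  have hterm : ∀ k : Fin s, (starRingEnd ℂ) (V k a) * V k b = ((s : ℂ) * Q)⁻¹ * w * z ^ k.1 := by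
    intro k
    rw [hV, hV, map_mul, ← Complex.exp_conj, map_div₀, map_one, Complex.conj_ofReal,
      hw, hz, ← Complex.exp_nat_mul, mul_assoc (((s : ℂ) * Q)⁻¹), ← Complex.exp_add,
      mul_mul_mul_comm, ← Complex.exp_add]
    congr 1
    · rw [← hsq, mul_inv, one_div]
    · congr 1
      simp only [map_mul, map_neg, Complex.conj_I, Complex.conj_ofReal, map_natCast, blockIdx,
        finProdFinEquiv_apply_val]
      push_cast
      field_simp
      ring
  rw [Matrix.mul_apply]
  simp only [Matrix.conjTranspose_apply, ← starRingEnd_apply, hterm]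
  rw [← Finset.mul_sum, Fin.sum_univ_eq_sum_range (fun i => z ^ i) s, Matrix.smul_apply]
  by_cases hab : a = b
  · subst hab
    simp [hz, hw]
    field_simp
  · rw [Matrix.one_apply_ne hab]
    have hzs : z ^ s = 1 := by
      rw [hz, ← Complex.exp_nat_mul, Complex.exp_eq_one_iff]
      refine ⟨(a.1 : ℤ) - b.1, ?_⟩
      push_cast
      field_simp
    have hz1 : z ≠ 1 := by
      intro h
      rw [hz, Complex.exp_eq_one_iff] at h
      obtain ⟨n, hn⟩ := h
      have hpi : (2 * (Real.pi : ℂ) * Complex.I) ≠ 0 := Complex.two_pi_I_ne_zero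
      rw [mul_comm] at hn
      have h2 := mul_right_cancel₀ hpi hn
      rw [div_eq_iff hsC] at h2
      have h3 : (a.1 : ℤ) - b.1 = n * s := by exact_mod_cast h2
      have h4 : (a.1 : ℤ) - b.1 = 0 := by
        apply Int.eq_zero_of_abs_lt_dvd (m := (s : ℤ)) ⟨n, by rw [h3]; ring⟩
        rw [abs_lt]
        have := a.2
        have := b.2
        constructor <;> omega
      apply hab
      ext
      omega
    rw [geom_sum_eq hz1, hzs]
    simp

lemma aux_trace (s Q : ℕ) (hQ : 0 < Q) (V : Matrix (Fin s) (Fin s) ℂ)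
    (hV : Vᴴ * V = ((Q : ℂ)⁻¹) • (1 : Matrix (Fin s) (Fin s) ℂ)) (c σ : ℂ) (p : Fin s → ℂ)
    (hd : ∀ k, c + σ * (p k / Q) ≠ 0) :
    ((c • (1 : Matrix (Fin s) (Fin s) ℂ) + σ • (Vᴴ * Matrix.diagonal p * V))⁻¹).trace =
      ∑ k, (c + σ * (p k / Q))⁻¹ := by
  have hQC : (Q : ℂ) ≠ 0 := by exact_mod_cast hQ.ne'
  have hV1 : ((Q : ℂ) • Vᴴ) * V = 1 := by
    rw [Matrix.smul_mul, hV, smul_smul, mul_inv_cancel₀ hQC, one_smul]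
  have hV2 : V * ((Q : ℂ) • Vᴴ) = 1 := mul_eq_one_comm.mp hV1
  set Wi := (Q : ℂ) • Vᴴ with hWi
  have hVh : Vᴴ = (Q : ℂ)⁻¹ • Wi := by rw [hWi, smul_smul, inv_mul_cancel₀ hQC, one_smul]
  have hM : c • (1 : Matrix (Fin s) (Fin s) ℂ) + σ • (Vᴴ * Matrix.diagonal p * V) =
      Wi * Matrix.diagonal (fun k => c + σ * (p k / Q)) * V := by
    have : (Matrix.diagonal (fun k => c + σ * (p k / Q)) : Matrix (Fin s) (Fin s) ℂ) =
        c • 1 + (σ * (Q : ℂ)⁻¹) • Matrix.diagonal p := by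
      ext i j
      by_cases h : i = j
      · subst h; simp; ring
      · simp [h]
    rw [this, hVh, Matrix.mul_add, Matrix.add_mul]
    simp only [Matrix.mul_smul, Matrix.smul_mul, Matrix.mul_one, hV1, smul_smul]
  have hinv : (c • (1 : Matrix (Fin s) (Fin s) ℂ) + σ • (Vᴴ * Matrix.diagonal p * V))⁻¹ =
      Wi * Matrix.diagonal (fun k => (c + σ * (p k / Q))⁻¹) * V := by
    apply Matrix.inv_eq_right_inv
    rw [hM]
    calc _ = Wi * Matrix.diagonal (fun k => c + σ * (p k / Q)) * (V * Wi) *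
          Matrix.diagonal (fun k => (c + σ * (p k / Q))⁻¹) * V := by
            simp only [Matrix.mul_assoc]
      _ = 1 := by
        rw [hV2, Matrix.mul_one, Matrix.mul_assoc Wi, Matrix.diagonal_mul_diagonal]
        simp only [mul_inv_cancel₀ (hd _)]
        simp [hV1]
  rw [hinv, Matrix.trace_mul_comm, ← Matrix.mul_assoc, hV2, Matrix.one_mul, Matrix.trace_diagonal]

/-- Equidistant sample transmission for low-pass c.w.s.s. signals (`N = s·Q`, `U_s` the first
`s` columns of the `N×N` DFT matrix): for every `r ∈ (0, 1)`,
`P(ε < err_I^u) ≥ 1 − f_bt(μ_I^u, ϱ_I^u, r)` with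
`err_I^u = P_x/(1 + (μ_E/σ_w²)·(N/s)·(1 − r))`, `μ_I^u = max{r_E − 1, 1}` and
`ϱ_I^u = (ϱ_E/μ_E²)·(s/N)`. -/
theorem stmt_3
    {Ω : Type} [MeasureSpace Ω] [IsProbabilityMeasure (ℙ : Measure Ω)]
    (s Q : ℕ) (hs : 0 < s) (hQ : 0 < Q) (td : Fin Q)
    (Us : Matrix (Fin (s * Q)) (Fin s) ℂ)
    (hUs : ∀ (i : Fin (s * Q)) (j : Fin s),
      Us i j = dftMatrix (s * Q) i ⟨j.1, lt_of_lt_of_le j.2 (Nat.le_mul_of_pos_right s hQ)⟩)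
    (Px σw2 : ℝ) (hPx : 0 < Px) (hσ : 0 < σw2)
    (μE ϱE rE : ℝ) (hμE : 0 < μE) (hϱE : 0 < ϱE) (hrE : 1 ≤ rE)
    (E : Fin (s * Q) → Ω → ℝ) (hEmeas : ∀ i, Measurable (E i))
    (hindep : iIndepFun E ℙ)
    (hident : ∀ i j, IdentDistrib (E i) (E j) ℙ ℙ)
    (hmean : ∀ i, ∫ ω, E i ω = μE)
    (hvar : ∀ i, variance (E i) ℙ = ϱE)
    (hbdd : ∀ i, ∀ᵐ ω, 0 ≤ E i ω ∧ E i ω ≤ rE * μE)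
    (p : Fin s → Ω → ℝ)
    (hp : ∀ k ω, p k ω = (∑ t : Fin Q, E (blockIdx s Q k t) ω) * (((s * Q : ℕ) : ℝ) / Px))
    (G : Ω → Matrix (Fin (s * Q)) (Fin (s * Q)) ℂ)
    (hG : ∀ ω, G ω = ∑ k : Fin s, ((p k ω : ℝ) : ℂ) •
      Matrix.single (blockIdx s Q k td) (blockIdx s Q k td) 1)
    (ε : Ω → ℝ)
    (hε : ∀ ω, ε ω =
      ((((s / Px : ℝ) : ℂ) • (1 : Matrix (Fin s) (Fin s) ℂ) +
        ((σw2 : ℝ) : ℂ)⁻¹ • (Usᴴ * G ω * Us))⁻¹).trace.re)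
    (r : ℝ) (hr0 : 0 < r) (hr1 : r < 1)
    (errIu μIu ϱIu : ℝ)
    (herrIu : errIu = Px / (1 + μE / σw2 * (((s * Q : ℕ) : ℝ) / s) * (1 - r)))
    (hμIu : μIu = max (rE - 1) 1)
    (hϱIu : ϱIu = ϱE / μE ^ 2 * ((s : ℝ) / ((s * Q : ℕ) : ℝ))) :
    ENNReal.ofReal (1 - fbt s μIu ϱIu r) ≤ ℙ {ω | ε ω < errIu} := by
  have hsR : (0 : ℝ) < s := by exact_mod_cast hs
  have hQR : (0 : ℝ) < Q := by exact_mod_cast hQ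
  have hsC : (s : ℂ) ≠ 0 := by exact_mod_cast hs.ne'
  have hQC : (Q : ℂ) ≠ 0 := by exact_mod_cast hQ.ne'
  set V : Matrix (Fin s) (Fin s) ℂ := Matrix.of fun k l => Us (blockIdx s Q k td) l with hVdef
  have hV : Vᴴ * V = ((Q : ℂ)⁻¹) • (1 : Matrix (Fin s) (Fin s) ℂ) := by
    apply aux_V s Q hs hQ td V
    intro k l
    rw [hVdef, Matrix.of_apply, hUs]
    simp [dftMatrix]
  have hGV : ∀ ω, Usᴴ * G ω * Us =
      Vᴴ * Matrix.diagonal (fun k => ((p k ω : ℝ) : ℂ)) * V := by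
    intro ω
    rw [hG, Matrix.mul_sum, Matrix.sum_mul]
    ext a b
    rw [Matrix.sum_apply, Matrix.mul_apply]
    refine Finset.sum_congr rfl fun k _ => ?_
    rw [Matrix.mul_diagonal, Matrix.mul_smul, Matrix.smul_mul, Matrix.smul_apply,
      Matrix.mul_assoc, Matrix.mul_apply,
      Finset.sum_eq_single (blockIdx s Q k td)]
    · simp [hVdef]
      ring
    · intro i _ hi
      rw [Matrix.single_mul_apply_of_ne _ _ _ _ _ hi]
      simp
    · simp
  have hεsum : ∀ ω, (∀ k, 0 ≤ ∑ t : Fin Q, E (blockIdx s Q k t) ω) →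
      ε ω = ∑ k : Fin s, (Px / s) / (1 + (∑ t : Fin Q, E (blockIdx s Q k t) ω) / σw2) := by
    intro ω hω
    have hpos : ∀ k, 0 < s / Px + σw2⁻¹ * (p k ω / Q) := by
      intro k
      have : 0 ≤ p k ω := by rw [hp]; exact mul_nonneg (hω k) (by positivity)
      positivity
    rw [hε, hGV, aux_trace s Q hQ V hV]
    · rw [Complex.re_sum]
      refine Finset.sum_congr rfl fun k _ => ?_
      have : ((((s / Px : ℝ) : ℂ) + ((σw2 : ℝ) : ℂ)⁻¹ * (((p k ω : ℝ) : ℂ) / (Q : ℂ)))⁻¹) =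
          (((s / Px + σw2⁻¹ * (p k ω / Q))⁻¹ : ℝ) : ℂ) := by push_cast; rfl
      rw [this, Complex.ofReal_re, hp]
      have := hω k
      have h1 : 0 < 1 + (∑ t : Fin Q, E (blockIdx s Q k t) ω) / σw2 := by positivity
      rw [inv_eq_one_div, div_eq_div_iff (by rw [← hp]; exact (hpos k).ne') h1.ne']
      push_cast
      field_simp
    · intro k h
      have h2 : (((s / Px + σw2⁻¹ * (p k ω / Q)) : ℝ) : ℂ) = 0 := by
        rw [← h]; push_cast; rfl
      exact (hpos k).ne' (by exact_mod_cast h2)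
  -- deterministic part
  set S : Fin s → Ω → ℝ := fun k ω => ∑ t : Fin Q, E (blockIdx s Q k t) ω with hS
  have hSmeas : ∀ k, Measurable (S k) := by
    intro k
    exact Finset.measurable_sum _ fun t _ => hEmeas _
  have hsub : {ω | ∃ k, S k ω ≤ Q * μE * (1 - r)}ᶜ ⊆ {ω | ε ω < errIu} := by
    intro ω hω
    simp only [Set.mem_compl_iff, Set.mem_setOf_eq, not_exists, not_le] at hω ⊢
    have hr : 0 < 1 - r := by linarith
    have h0 : 0 < Q * μE * (1 - r) := by positivity
    rw [hεsum ω (fun k => (h0.trans (hω k)).le), herrIu]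
    have h1 : Px / (1 + μE / σw2 * (((s * Q : ℕ) : ℝ) / s) * (1 - r)) =
        ∑ k : Fin s, (Px / s) / (1 + (Q * μE * (1 - r)) / σw2) := by
      rw [Finset.sum_const, Finset.card_univ, Fintype.card_fin, nsmul_eq_mul]
      push_cast
      field_simp
    rw [h1]
    refine Finset.sum_lt_sum_of_nonempty ⟨⟨0, hs⟩, Finset.mem_univ _⟩ fun k _ => ?_
    have := hω k
    simp only [hS] at this
    gcongr
  -- parameters
  have hμ1 : 1 ≤ μIu := by rw [hμIu]; exact le_max_right _ _
  have hϱ : ϱIu = ϱE / μE ^ 2 / Q := by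
    rw [hϱIu]; push_cast; field_simp
  have hϱ0 : 0 < ϱIu := by rw [hϱ]; positivity
  have htail : ∀ k, (ℙ : Measure Ω).real {ω | S k ω ≤ Q * μE * (1 - r)} ≤
      Real.exp (-(ϱIu / μIu ^ 2) * hfun (μIu * r / ϱIu)) := by
    intro k
    have hinj : Function.Injective (fun t : Fin Q => blockIdx s Q k t) := by
      intro t t' h
      have := finProdFinEquiv.injective h
      simpa using this
    have hi := (hindep.precomp hinj).comp (fun _ x => (μE - x) / (Q * μE))
      (fun _ => by fun_prop)
    have hEi : ∀ i, Integrable (E i) ℙ := by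
      intro i
      refine Integrable.of_bound (hEmeas i).aestronglyMeasurable (rE * μE) ?_
      filter_upwards [hbdd i] with ω h
      rw [Real.norm_eq_abs, abs_of_nonneg h.1]
      exact h.2
    have hB := aux_bennett Q (fun t ω => (μE - E (blockIdx s Q k t) ω) / (Q * μE))
      (fun t => by have := hEmeas (blockIdx s Q k t); fun_prop) hi μIu
      ((rE * μE + μE) / (Q * μE)) ϱIu (by linarith) hϱ0 ?_ ?_ ?_ hQ r hr0
    · refine le_trans (measureReal_mono ?_) hB
      intro ω hω
      simp only [Set.mem_setOf_eq, hS] at hω ⊢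
      rw [← Finset.sum_div, Finset.sum_sub_distrib, le_div_iff₀ (by positivity)]
      simp
      linarith
    · intro t
      filter_upwards [hbdd (blockIdx s Q k t)] with ω h
      constructor
      · rw [abs_div, abs_of_pos (by positivity : (0 : ℝ) < Q * μE)]
        gcongr
        rw [abs_le]
        constructor <;> nlinarith [h.1, h.2]
      · refine le_trans ?_ hμ1
        rw [div_le_one (by positivity)]
        have : (1 : ℝ) ≤ Q := by exact_mod_cast hQ
        nlinarith [h.1]
    · intro t
      rw [integral_div, integral_sub (integrable_const _) (hEi _), hmean]
      simp
    · intro t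
      have h1 := variance_eq_integral (hEmeas (blockIdx s Q k t)).aemeasurable (μ := ℙ)
      rw [hvar, hmean] at h1
      have h2 : ∀ ω, ((μE - E (blockIdx s Q k t) ω) / (Q * μE)) ^ 2 =
          (E (blockIdx s Q k t) ω - μE) ^ 2 / (Q * μE) ^ 2 := by
        intro ω
        rw [div_pow]; ring
      simp only [h2]
      rw [integral_div, ← h1, hϱ]
      field_simp
  have hbad : (ℙ : Measure Ω).real {ω | ∃ k, S k ω ≤ Q * μE * (1 - r)} ≤ fbt s μIu ϱIu r := by
    rw [Set.setOf_exists]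
    refine (measureReal_iUnion_fintype_le _).trans ?_
    refine (Finset.sum_le_sum fun k _ => htail k).trans ?_
    rw [Finset.sum_const, Finset.card_univ, Fintype.card_fin, nsmul_eq_mul, fbt]
    have := Real.exp_pos (-(ϱIu / μIu ^ 2) * hfun (μIu * r / ϱIu))
    nlinarith [mul_pos hsR this]
  have hbm : MeasurableSet {ω | ∃ k, S k ω ≤ Q * μE * (1 - r)} := by
    rw [Set.setOf_exists]
    exact MeasurableSet.iUnion fun k => measurableSet_le (hSmeas k) measurable_const
  refine le_trans ?_ (measure_mono hsub)
  rw [← ofReal_measureReal (measure_ne_top _ _), probReal_compl_eq_one_sub hbm]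
  exact ENNReal.ofReal_le_ofReal (by linarith)
end

section
/- Consider the off-line problem of minimizing ε̄(B) = tr[((s/P_x)·I_s + (1/σ_w²)·U_s† B U_s)^{−1}] over N×N diagonal matrices B = diag(b_1,…,b_N) with b_t ≥ 0 for all t, subject to the total-energy constraint Σ_{t=1}^{N} b_t·σ_{x,t}² = E_tot. Then the uniform allocation b_t = E_tot/P_x for all t is feasible and optimal, and the minimum value equals ε_d = P_x / (1 + E_tot/(s·σ_w²)); that is, every feasible B satisfies ε̄(B) ≥ P_x / (1 + E_tot/(s·σ_w²)), with equality at the uniform allocation. -/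
open Matrix Finset

open scoped ComplexOrder

lemma aux_inv_trace {s : ℕ} (M : Matrix (Fin s) (Fin s) ℂ) (hM : M.PosDef) (c : ℝ) :
    2 * c * s - c ^ 2 * M.trace.re ≤ (M⁻¹).trace.re := by
  have hu : IsUnit M.det := (Matrix.isUnit_iff_isUnit_det M).mp hM.isUnit
  have h1 : ((1 - (c : ℂ) • M)ᴴ * M⁻¹ * (1 - (c : ℂ) • M)).PosSemidef :=
    hM.inv.posSemidef.conjTranspose_mul_mul_same _
  have h2 : (1 - (c : ℂ) • M)ᴴ * M⁻¹ * (1 - (c : ℂ) • M)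
      = M⁻¹ - (2 * c : ℂ) • (1 : Matrix (Fin s) (Fin s) ℂ) + ((c : ℂ) ^ 2) • M := by
    have hH : Mᴴ = M := hM.isHermitian
    simp only [conjTranspose_sub, conjTranspose_one, conjTranspose_smul, hH, sub_mul, mul_sub,
      one_mul, mul_one, smul_mul_assoc, mul_smul_comm, Matrix.mul_nonsing_inv _ hu,
      Matrix.nonsing_inv_mul _ hu, smul_smul]
    simp only [Complex.star_def, Complex.conj_ofReal]
    module
  have h3 := h1.trace_nonneg
  rw [h2] at h3
  have h4 := (Complex.le_def.mp h3).1
  simp only [trace_add, trace_sub, trace_smul, trace_one, ← Complex.ofReal_pow, smul_eq_mul,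
    Complex.add_re, Complex.sub_re, Complex.re_ofReal_mul, Fintype.card_fin, Complex.zero_re] at h4
  have h5 : ((2 * c : ℂ) * (s : ℂ)).re = 2 * c * s := by
    rw [show (2 * c : ℂ) * (s : ℂ) = ((2 * c * s : ℝ) : ℂ) by push_cast; ring, Complex.ofReal_re]
  rw [h5] at h4
  linarith

lemma aux_trace_s4 {s N : ℕ} (Us : Matrix (Fin N) (Fin s) ℂ) (b : Fin N → ℝ) :
    (Usᴴ * Matrix.diagonal (fun t => ((b t : ℝ) : ℂ)) * Us).trace
      = ((∑ t, b t * rowNormSq Us t : ℝ) : ℂ) := by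
  rw [Matrix.mul_assoc, Matrix.trace_mul_comm]
  rw [Matrix.mul_assoc, Matrix.trace]
  simp only [Matrix.diag, Matrix.diagonal_mul]
  simp only [Matrix.mul_apply, conjTranspose_apply, rowNormSq]
  push_cast
  refine Finset.sum_congr rfl fun t _ => ?_
  congr 1
  refine Finset.sum_congr rfl fun j _ => ?_
  rw [Complex.star_def, Complex.mul_conj']

/-- Off-line distortion minimization under a total energy constraint: the uniform allocation
`b_t = E_tot/P_x` is feasible and optimal, and the minimum of
`ε̄(B) = tr[((s/P_x)·I + (1/σ_w²)·Us† B Us)⁻¹]` over feasible diagonal `B ≥ 0` with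
`Σ_t b_t·σ_{x,t}² = E_tot` equals `P_x/(1 + E_tot/(s·σ_w²))`. -/
theorem stmt_4 (s N : ℕ) (hs : 0 < s) (hN : 0 < N) (hsN : s ≤ N)
    (Us : Matrix (Fin N) (Fin s) ℂ) (hUs : Usᴴ * Us = 1)
    (Px σw2 Etot : ℝ) (hPx : 0 < Px) (hσ : 0 < σw2) (hEtot : 0 ≤ Etot)
    (σx2 : Fin N → ℝ) (hσx2 : ∀ i, σx2 i = Px / s * rowNormSq Us i)
    (errBar : (Fin N → ℝ) → ℝ)
    (herrBar : ∀ b : Fin N → ℝ, errBar b =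
      ((((s / Px : ℝ) : ℂ) • (1 : Matrix (Fin s) (Fin s) ℂ) +
        ((σw2 : ℝ) : ℂ)⁻¹ • (Usᴴ * Matrix.diagonal (fun t => ((b t : ℝ) : ℂ)) * Us))⁻¹).trace.re) :
    ((∀ t : Fin N, 0 ≤ Etot / Px) ∧ (∑ t, Etot / Px * σx2 t = Etot) ∧
      errBar (fun _ => Etot / Px) = Px / (1 + Etot / (s * σw2))) ∧
    (∀ b : Fin N → ℝ, (∀ t, 0 ≤ b t) → (∑ t, b t * σx2 t = Etot) →
      Px / (1 + Etot / (s * σw2)) ≤ errBar b) := by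
  have hs' : (0 : ℝ) < s := by exact_mod_cast hs
  have hrow : ∑ t, rowNormSq Us t = s := by
    have h := aux_trace_s4 Us (fun _ => 1)
    simp only [Complex.ofReal_one, Matrix.diagonal_one, Matrix.mul_one, hUs, trace_one,
      Fintype.card_fin, one_mul] at h
    exact_mod_cast h.symm
  have hden : 0 < 1 + Etot / (s * σw2) := by positivity
  refine ⟨⟨fun _ => by positivity, ?_, ?_⟩, ?_⟩
  · simp only [hσx2]
    rw [← Finset.mul_sum, ← Finset.mul_sum, hrow]
    field_simp
  · rw [herrBar]
    have hd : Matrix.diagonal (fun _ : Fin N => ((Etot / Px : ℝ) : ℂ))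
        = ((Etot / Px : ℝ) : ℂ) • (1 : Matrix (Fin N) (Fin N) ℂ) := by
      rw [Matrix.smul_one_eq_diagonal]
    rw [hd, Matrix.mul_smul, Matrix.mul_one, Matrix.smul_mul, hUs, smul_smul, ← add_smul,
      ← Complex.ofReal_inv, ← Complex.ofReal_mul, ← Complex.ofReal_add]
    set a : ℝ := s / Px + σw2⁻¹ * (Etot / Px) with ha
    have hapos : 0 < a := by positivity
    have hinv : ((a : ℂ) • (1 : Matrix (Fin s) (Fin s) ℂ))⁻¹ = ((a⁻¹ : ℝ) : ℂ) • 1 := by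
      apply Matrix.inv_eq_right_inv
      rw [smul_mul_smul_comm, mul_one, ← Complex.ofReal_mul, mul_inv_cancel₀ hapos.ne']
      simp
    rw [hinv, trace_smul, trace_one, smul_eq_mul, Complex.re_ofReal_mul, Fintype.card_fin,
      Complex.natCast_re, ha]
    field_simp
  · intro b hb hE
    rw [herrBar]
    set M := (((s / Px : ℝ) : ℂ) • (1 : Matrix (Fin s) (Fin s) ℂ) +
        ((σw2 : ℝ) : ℂ)⁻¹ • (Usᴴ * Matrix.diagonal (fun t => ((b t : ℝ) : ℂ)) * Us)) with hMdef
    have hM : M.PosDef := by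
      apply Matrix.PosDef.add_posSemidef
      · apply Matrix.PosDef.one.smul
        rw [Complex.zero_lt_real]; positivity
      · apply Matrix.PosSemidef.smul
        · apply Matrix.PosSemidef.conjTranspose_mul_mul_same
          apply Matrix.PosSemidef.diagonal
          intro t
          simpa using hb t
        · rw [← Complex.ofReal_inv, Complex.zero_le_real]; positivity
    have hsum : ∑ t, b t * rowNormSq Us t = Etot * s / Px := by
      rw [← hE, Finset.sum_mul, Finset.sum_div]
      refine Finset.sum_congr rfl fun t _ => ?_
      rw [hσx2]; field_simp
    have htr : M.trace.re = s / Px * s + σw2⁻¹ * (Etot * s / Px) := by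
      rw [hMdef, trace_add, trace_smul, trace_smul, aux_trace_s4, hsum, trace_one, Fintype.card_fin,
        ← Complex.ofReal_inv, smul_eq_mul, smul_eq_mul, Complex.add_re, Complex.re_ofReal_mul,
        Complex.re_ofReal_mul, Complex.ofReal_re, Complex.natCast_re]
    have hτ : 0 < M.trace.re := by rw [htr]; positivity
    have key := aux_inv_trace M hM (s / M.trace.re)
    refine le_trans (le_of_eq ?_) key
    have e1 : 2 * (s / M.trace.re) * s - (s / M.trace.re) ^ 2 * M.trace.re
        = (s : ℝ) ^ 2 / M.trace.re := by field_simp; ring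
    rw [e1, htr]
    field_simp
end

section
/- Under the energy-harvesting block-transmission model with the additional assumption that all rows of U_s have equal squared norm ‖u_i‖² = s/N for every i (as holds for circularly wide-sense stationary signals, where U_s consists of columns of the DFT matrix), the expected estimation error satisfies E[ε] ≥ P_x / (1 + (μ_E/σ_w²)·(N/s)). -/
open Matrix Finset MeasureTheory ProbabilityTheory

section aux
open scoped ComplexOrder

open scoped MatrixOrder in
lemma aux_factor {s : ℕ} (B : Matrix (Fin s) (Fin s) ℂ) (hB : B.PosSemidef) :
    ∃ C : Matrix (Fin s) (Fin s) ℂ, B = Cᴴ * C :=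
  CStarAlgebra.nonneg_iff_eq_star_mul_self.mp hB.nonneg

lemma aux_trace_s7 {s : ℕ} (a c : ℝ) (ha : 0 < a) (B : Matrix (Fin s) (Fin s) ℂ)
    (hB : B.PosSemidef) :
    (2 * c * s - c ^ 2 * (((a : ℂ) • (1 : Matrix (Fin s) (Fin s) ℂ) + B).trace.re) ≤
      (((a : ℂ) • (1 : Matrix (Fin s) (Fin s) ℂ) + B)⁻¹).trace.re) ∧
    0 ≤ (((a : ℂ) • (1 : Matrix (Fin s) (Fin s) ℂ) + B)⁻¹).trace.re ∧
    (((a : ℂ) • (1 : Matrix (Fin s) (Fin s) ℂ) + B)⁻¹).trace.re ≤ s / a := by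
  have ha' : (0 : ℂ) < (a : ℂ) := by exact_mod_cast ha
  have h1 : ((a : ℂ) • (1 : Matrix (Fin s) (Fin s) ℂ)).PosDef := PosDef.one.smul ha'
  have hA : ((a : ℂ) • (1 : Matrix (Fin s) (Fin s) ℂ) + B).PosDef := h1.add_posSemidef hB
  set A := (a : ℂ) • (1 : Matrix (Fin s) (Fin s) ℂ) + B with hAdef
  have hu : IsUnit A.det := (Matrix.isUnit_iff_isUnit_det A).1 hA.isUnit
  have hi : A⁻¹.PosSemidef := hA.inv.posSemidef
  have hAi : A * A⁻¹ = 1 := Matrix.mul_nonsing_inv A hu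
  have hiA : A⁻¹ * A = 1 := Matrix.nonsing_inv_mul A hu
  refine ⟨?_, ?_, ?_⟩
  · have h2 := (hi.conjTranspose_mul_mul_same (1 - (c : ℂ) • A)).trace_nonneg
    have h3 : (1 - (c : ℂ) • A)ᴴ * A⁻¹ * (1 - (c : ℂ) • A)
        = A⁻¹ - (2 * c : ℂ) • 1 + (c ^ 2 : ℂ) • A := by
      have : (1 - (c : ℂ) • A)ᴴ = 1 - (c : ℂ) • A := by
        rw [conjTranspose_sub, conjTranspose_smul, hA.isHermitian.eq]; simp
      rw [this]
      simp only [sub_mul, mul_sub, one_mul, mul_one, smul_mul_assoc, mul_smul_comm, hAi, hiA]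
      module
    rw [h3] at h2
    have h4 := (Complex.le_def.1 h2).1
    simp only [trace_add, trace_sub, trace_smul, trace_one, Fintype.card_fin, smul_eq_mul,
      Complex.add_re, Complex.sub_re, Complex.zero_re] at h4
    have e1 : ((2 * c : ℂ) * (s : ℂ)).re = 2 * c * s := by
      have : ((2 * c : ℂ) * (s : ℂ)) = ((2 * c * s : ℝ) : ℂ) := by push_cast; ring
      rw [this, Complex.ofReal_re]
    have e2 : ((c ^ 2 : ℂ) * A.trace).re = c ^ 2 * A.trace.re := by
      rw [← Complex.ofReal_pow, Complex.re_ofReal_mul]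
    rw [e1, e2] at h4
    linarith
  · exact (Complex.le_def.1 hi.trace_nonneg).1
  · obtain ⟨C, hC⟩ := aux_factor B hB
    have h2 := (hi.mul_mul_conjTranspose_same C).trace_nonneg
    have h3 : (C * A⁻¹ * Cᴴ).trace = (1 - (a : ℂ) • A⁻¹).trace := by
      rw [Matrix.mul_assoc, Matrix.trace_mul_comm, Matrix.mul_assoc, ← hC]
      congr 1
      have : A⁻¹ * A = (a : ℂ) • A⁻¹ + A⁻¹ * B := by
        have h5 : A⁻¹ * A = A⁻¹ * ((a : ℂ) • (1 : Matrix (Fin s) (Fin s) ℂ) + B) := rfl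
        rw [h5, mul_add, mul_smul_comm, mul_one]
      rw [hiA] at this
      rw [this]; simp
    rw [h3] at h2
    have h4 := (Complex.le_def.1 h2).1
    simp only [trace_sub, trace_smul, trace_one, Fintype.card_fin, smul_eq_mul,
      Complex.sub_re, Complex.zero_re, Complex.re_ofReal_mul, Complex.natCast_re] at h4
    rw [le_div_iff₀ ha]
    linarith

lemma aux_psd {N s : ℕ} (Us : Matrix (Fin N) (Fin s) ℂ) (g : Fin N → ℝ) (hg : ∀ i, 0 ≤ g i)
    (σ : ℝ) (hσ : 0 < σ) :
    ((σ : ℂ)⁻¹ • (Usᴴ * Matrix.diagonal (fun i => (g i : ℂ)) * Us)).PosSemidef := by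
  have hσ' : (0 : ℂ) ≤ (σ : ℂ)⁻¹ := by
    rw [← Complex.ofReal_inv]; exact_mod_cast (inv_pos.2 hσ).le
  refine PosSemidef.smul ?_ hσ'
  refine PosSemidef.conjTranspose_mul_mul_same ?_ Us
  rw [posSemidef_diagonal_iff]
  intro i
  exact_mod_cast hg i

end aux

lemma aux_meas {Ω : Type} [MeasurableSpace Ω] {n s : ℕ}
    (F : (Fin n → ℝ) → Matrix (Fin s) (Fin s) ℂ) (hF : Continuous F)
    (p : Fin n → Ω → ℝ) (hpm : ∀ k, Measurable (p k)) :
    Measurable (fun ω => ((F (fun k => p k ω))⁻¹).trace.re) := by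
  have h : (fun ω => ((F (fun k => p k ω))⁻¹).trace.re) = fun ω =>
      ((F (fun k => p k ω)).det⁻¹ * (F (fun k => p k ω)).adjugate.trace).re := by
    funext ω
    rw [Matrix.inv_def, trace_smul, Ring.inverse_eq_inv', smul_eq_mul]
  rw [h]
  have hpv : Measurable (fun ω => (fun k => p k ω)) := measurable_pi_lambda _ hpm
  have hd : Measurable (fun ω => (F (fun k => p k ω)).det) :=
    hF.matrix_det.measurable.comp hpv
  have hadj : Measurable (fun ω => (F (fun k => p k ω)).adjugate.trace) :=
    hF.matrix_adjugate.matrix_trace.measurable.comp hpv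
  exact Complex.measurable_re.comp (hd.inv.mul hadj)

lemma aux_cont {n N s : ℕ} (Us : Matrix (Fin N) (Fin s) ℂ) (b : Fin N → Fin n) (a c : ℂ) :
    Continuous (fun q : Fin n → ℝ => a • (1 : Matrix (Fin s) (Fin s) ℂ) +
        c • (Usᴴ * Matrix.diagonal (fun i => ((q (b i) : ℝ) : ℂ)) * Us)) := by
  have h : Continuous (fun q : Fin n → ℝ =>
      Usᴴ * Matrix.diagonal (fun i => ((q (b i) : ℝ) : ℂ)) * Us) := by
    refine (continuous_const.matrix_mul (Continuous.matrix_diagonal ?_)).matrix_mul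
        continuous_const
    fun_prop
  exact continuous_const.add (h.const_smul c)

lemma aux_trace_diag {N s : ℕ} (Us : Matrix (Fin N) (Fin s) ℂ) (g : Fin N → ℝ) :
    (Usᴴ * Matrix.diagonal (fun i => (g i : ℂ)) * Us).trace
      = ((∑ i, g i * rowNormSq Us i : ℝ) : ℂ) := by
  rw [Matrix.mul_assoc, Matrix.trace_mul_comm, Matrix.trace]
  push_cast
  refine Finset.sum_congr rfl fun i _ => ?_
  rw [Matrix.diag_apply, Matrix.mul_assoc, Matrix.diagonal_mul, Matrix.mul_apply, rowNormSq]
  congr 1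
  push_cast
  refine Finset.sum_congr rfl fun j _ => ?_
  rw [conjTranspose_apply, Complex.star_def, Complex.mul_conj, Complex.normSq_eq_norm_sq]
  push_cast; rfl

/-- In the energy-harvesting block-transmission model with all rows of `Us` of equal squared
norm `‖u_i‖² = s/N` (c.w.s.s. signals), the expected estimation error satisfies
`E[ε] ≥ P_x/(1 + (μ_E/σ_w²)·(N/s))`. -/
theorem stmt_7
    {Ω : Type} [MeasureSpace Ω] [IsProbabilityMeasure (ℙ : Measure Ω)]
    (s nT Q : ℕ) (hs : 0 < s) (hnT : 0 < nT) (hQ : 0 < Q) (hsN : s ≤ nT * Q)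
    (Us : Matrix (Fin (nT * Q)) (Fin s) ℂ) (hUs : Usᴴ * Us = 1)
    (hrow : ∀ i, rowNormSq Us i = (s : ℝ) / (nT * Q))
    (Px σw2 : ℝ) (hPx : 0 < Px) (hσ : 0 < σw2)
    (μE ϱE rE : ℝ) (hμE : 0 < μE) (hϱE : 0 < ϱE) (hrE : 1 ≤ rE)
    (E : Fin (nT * Q) → Ω → ℝ) (hEmeas : ∀ i, Measurable (E i))
    (hindep : iIndepFun E ℙ)
    (hident : ∀ i j, IdentDistrib (E i) (E j) ℙ ℙ)
    (hmean : ∀ i, ∫ ω, E i ω = μE)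
    (hvar : ∀ i, variance (E i) ℙ = ϱE)
    (hbdd : ∀ i, ∀ᵐ ω, 0 ≤ E i ω ∧ E i ω ≤ rE * μE)
    (S : Fin nT → ℝ)
    (hS : ∀ k, S k = ∑ t : Fin Q, Px / s * rowNormSq Us (blockIdx nT Q k t))
    (p : Fin nT → Ω → ℝ)
    (hp : ∀ k ω, p k ω = (∑ t : Fin Q, E (blockIdx nT Q k t) ω) / S k)
    (G : Ω → Matrix (Fin (nT * Q)) (Fin (nT * Q)) ℂ)
    (hG : ∀ ω, G ω = Matrix.diagonal fun i => ((p (blockOf nT Q i) ω : ℝ) : ℂ))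
    (ε : Ω → ℝ)
    (hε : ∀ ω, ε ω =
      ((((s / Px : ℝ) : ℂ) • (1 : Matrix (Fin s) (Fin s) ℂ) +
        ((σw2 : ℝ) : ℂ)⁻¹ • (Usᴴ * G ω * Us))⁻¹).trace.re) :
    Px / (1 + μE / σw2 * ((nT * Q : ℕ) : ℝ) / s) ≤ ∫ ω, ε ω := by
  have hs' : (0 : ℝ) < s := by exact_mod_cast hs
  have hT' : (0 : ℝ) < nT := by exact_mod_cast hnT
  have hQ' : (0 : ℝ) < Q := by exact_mod_cast hQ
  have hSv : ∀ k, S k = Px / nT := by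
    intro k
    rw [hS]
    simp only [hrow, Finset.sum_const, Finset.card_univ, Fintype.card_fin, nsmul_eq_mul]
    field_simp
  have hpm : ∀ k, Measurable (p k) := by
    intro k
    have : p k = fun ω => (∑ t : Fin Q, E (blockIdx nT Q k t) ω) / S k := funext (hp k)
    rw [this]
    exact (Finset.measurable_sum _ fun t _ => hEmeas _).div_const _
  have hEint : ∀ i, Integrable (E i) ℙ := by
    intro i
    refine Integrable.of_bound (hEmeas i).aestronglyMeasurable (rE * μE) ?_
    filter_upwards [hbdd i] with ω h
    rw [Real.norm_eq_abs, abs_of_nonneg h.1]; exact h.2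
  have hpint : ∀ k, Integrable (p k) ℙ := by
    intro k
    have : p k = fun ω => (∑ t : Fin Q, E (blockIdx nT Q k t) ω) / S k := funext (hp k)
    rw [this]
    exact (integrable_finsetSum _ fun t _ => hEint _).div_const _
  have hpmean : ∀ k, ∫ ω, p k ω = nT * Q * μE / Px := by
    intro k
    simp only [hp]
    rw [integral_div, integral_finsetSum _ fun t _ => hEint _]
    simp only [hmean, hSv, Finset.sum_const, Finset.card_univ, Fintype.card_fin, nsmul_eq_mul]
    field_simp
  have hpnn : ∀ᵐ ω, ∀ k, 0 ≤ p k ω := by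
    have h : ∀ᵐ ω, ∀ i, 0 ≤ E i ω ∧ E i ω ≤ rE * μE := ae_all_iff.2 hbdd
    filter_upwards [h] with ω h k
    rw [hp, hSv]
    exact div_nonneg (Finset.sum_nonneg fun t _ => (h _).1) (by positivity)
  set a : ℝ := s / Px with hadef
  have ha : 0 < a := by positivity
  have hB : ∀ᵐ ω, ∀ c : ℝ,
      (2 * c * s - c ^ 2 * ((((a : ℂ) • (1 : Matrix (Fin s) (Fin s) ℂ) + (σw2 : ℂ)⁻¹ • (Usᴴ * G ω * Us))).trace.re) ≤
        (((a : ℂ) • (1 : Matrix (Fin s) (Fin s) ℂ) + (σw2 : ℂ)⁻¹ • (Usᴴ * G ω * Us))⁻¹).trace.re) ∧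
      0 ≤ (((a : ℂ) • (1 : Matrix (Fin s) (Fin s) ℂ) + (σw2 : ℂ)⁻¹ • (Usᴴ * G ω * Us))⁻¹).trace.re ∧
      (((a : ℂ) • (1 : Matrix (Fin s) (Fin s) ℂ) + (σw2 : ℂ)⁻¹ • (Usᴴ * G ω * Us))⁻¹).trace.re ≤ s / a := by
    filter_upwards [hpnn] with ω h
    rw [hG]
    exact fun c => aux_trace_s7 a c ha _
      (aux_psd Us (fun i => p (blockOf nT Q i) ω) (fun i => h _) σw2 hσ)
  -- trace of the matrix
  have htr : ∀ ω, (((a : ℝ) : ℂ) • (1 : Matrix (Fin s) (Fin s) ℂ) +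
        ((σw2 : ℝ) : ℂ)⁻¹ • (Usᴴ * G ω * Us)).trace.re =
      a * s + σw2⁻¹ * ∑ i, p (blockOf nT Q i) ω * (s / (nT * Q)) := by
    intro ω
    rw [hG, trace_add, trace_smul, trace_smul, trace_one,
      aux_trace_diag Us (fun i => p (blockOf nT Q i) ω), ← Complex.ofReal_inv]
    simp only [smul_eq_mul, Complex.add_re, Complex.re_ofReal_mul, Complex.ofReal_re,
      Fintype.card_fin, Complex.natCast_re, hrow]
  have hmeas : Measurable ε := by
    have h : ε = fun ω => _ := funext hε
    rw [h]
    simp only [hG]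
    exact aux_meas _ (aux_cont Us (blockOf nT Q) _ _) p hpm
  have hεint : Integrable ε ℙ := by
    refine Integrable.of_bound hmeas.aestronglyMeasurable (s / a) ?_
    filter_upwards [hB] with ω h
    obtain ⟨-, h2, h3⟩ := h 0
    rw [hε, Real.norm_eq_abs, abs_of_nonneg h2]; exact h3
  have hsumint : Integrable (fun ω => ∑ i, p (blockOf nT Q i) ω * ((s : ℝ) / (nT * Q))) ℙ :=
    integrable_finsetSum _ fun i _ => (hpint _).mul_const _
  set m : ℝ := a * s + σw2⁻¹ * (s * (nT * Q * μE / Px)) with hm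
  have hmpos : 0 < m := by positivity
  have hTint : Integrable (fun ω => a * s +
      σw2⁻¹ * ∑ i, p (blockOf nT Q i) ω * ((s : ℝ) / (nT * Q))) ℙ :=
    (integrable_const _).add (hsumint.const_mul _)
  have hTmean : ∫ ω, (a * s +
      σw2⁻¹ * ∑ i, p (blockOf nT Q i) ω * ((s : ℝ) / (nT * Q))) = m := by
    rw [integral_add (integrable_const _) (hsumint.const_mul _), integral_const_mul σw2⁻¹,
      integral_finsetSum _ fun i _ => (hpint _).mul_const _]
    simp only [integral_mul_const, hpmean, Finset.sum_const, Finset.card_univ, Fintype.card_fin,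
      nsmul_eq_mul, integral_const, probReal_univ, one_smul, hm]
    push_cast
    field_simp
  have hfin : ∫ ω, (2 * (s / m) * s - (s / m) ^ 2 * (a * s +
      σw2⁻¹ * ∑ i, p (blockOf nT Q i) ω * ((s : ℝ) / (nT * Q)))) ≤ ∫ ω, ε ω := by
    refine integral_mono_ae ((integrable_const _).sub (hTint.const_mul _)) hεint ?_
    filter_upwards [hB] with ω h
    obtain ⟨h1, -, -⟩ := h (s / m)
    rw [htr] at h1
    rw [hε]; exact h1
  rw [integral_sub (integrable_const _) (hTint.const_mul _), integral_const_mul ((s / m) ^ 2), hTmean] at hfin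
  simp only [integral_const, probReal_univ, one_smul] at hfin
  refine le_trans (le_of_eq ?_) hfin
  have e1 : 2 * (s / m) * s - (s / m) ^ 2 * m = s ^ 2 / m := by field_simp; ring
  rw [e1, hm, hadef]
  push_cast
  field_simp
end
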